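/- arXiv:2508.12113 — 6 statements merged into one kernel-verified Lean document; each statement's English description precedes it below -/
import Mathlib

section
/- Let K have characteristic zero and let A = A(f_A) be a hyperplane arrangement of d ≥ 2 hyperplanes in ℙⁿ. For a general linear form ℓ, the pair f_A, ∂f_A/∂ℓ is a regular sequence in S (so (f_A, ∂f_A/∂ℓ) is a complete intersection of codimension 2), and there is an equality of ideals (f_A, ∂f_A/∂ℓ) = ⋂_{P ∈ S(A)} (g_P, ∂g_P/∂ℓ), where each (g_P, ∂g_P/∂ℓ) is a primary ideal whose radical is I_P; this is the minimal primary decomposition of (f_A, ∂f_A/∂ℓ). -/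
open MvPolynomial

/-- The derivative `∂f/∂ℓ = Σᵢ aᵢ·∂f/∂xᵢ` of `f` in the direction of the linear form
`ℓ = Σᵢ aᵢxᵢ` with coefficient vector `a`. -/
noncomputable def lderiv {K : Type*} [CommRing K] {m : ℕ} (a : Fin m → K)
    (f : MvPolynomial (Fin m) K) : MvPolynomial (Fin m) K :=
  ∑ i, a i • pderiv i f

/-- The top support `S(A)` of the singular locus of the arrangement defined by the linear
forms `L i`: the (ideals of the) codimension-two subspaces cut out by two distinct
hyperplanes of the arrangement; `I_P = (L i, L j)`. -/
def singSupp {K : Type*} [CommRing K] {m d : ℕ} (L : Fin d → MvPolynomial (Fin m) K) :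
    Set (Ideal (MvPolynomial (Fin m) K)) :=
  {I | ∃ i j : Fin d, i ≠ j ∧ I = Ideal.span {L i, L j}}

open Classical in
/-- `g_P`: the product of the linear factors of `f_A = Π L i` that lie in `I_P`. -/
noncomputable def gOf {K : Type*} [CommRing K] {m d : ℕ}
    (L : Fin d → MvPolynomial (Fin m) K) (P : Ideal (MvPolynomial (Fin m) K)) :
    MvPolynomial (Fin m) K :=
  ∏ i ∈ Finset.univ.filter (fun i => L i ∈ P), L i

/-!
Modulo a member `Lᵢ` of the arrangement, `∂f/∂ℓ` is a nonzero constant times the product of the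
other members. Peeling off the factors of `f`, and then those of this product, one filters
`S ⧸ (f, ∂f/∂ℓ)` with quotients `S ⧸ (Lᵢ, Lⱼ)`, so an element outside all the primes `(Lᵢ, Lⱼ)` is
a nonzerodivisor modulo `(f, ∂f/∂ℓ)`. The same holds for each localization `g_P`, whose only such
prime is `P`; hence `(g_P, ∂g_P/∂ℓ)` is `P`-primary. Finally, writing `f = g_P e` with `e ∉ P`,
the multiplier `e²` carries `(g_P, ∂g_P/∂ℓ)` into `(f, ∂f/∂ℓ)`; prime avoidance replaces these
multipliers, one for each `P`, by a single nonzerodivisor.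
-/

section RegularElements

variable {R ι : Type*} [CommRing R]

lemma isSMulRegular_quotient_of_notMem (P : Ideal R) [hP : P.IsPrime] {s : R} (hs : s ∉ P) :
    IsSMulRegular (R ⧸ P) s :=
  (isSMulRegular_quotient_iff_mem_of_smul_mem P s).2 fun _ hx =>
    (hP.mem_or_mem hx).resolve_left hs

lemma isSMulRegular_quotient_span_singleton_of_prime [IsDomain R] {p h : R} (hp : Prime p)
    (hph : ¬ p ∣ h) : IsSMulRegular (R ⧸ Ideal.span {h}) p := by
  rw [isSMulRegular_quotient_iff_mem_of_smul_mem]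
  intro x hx
  obtain ⟨y, hy : p * x = h * y⟩ := Ideal.mem_span_singleton.1 hx
  obtain ⟨z, rfl⟩ := (hp.dvd_or_dvd ⟨x, hy.symm⟩).resolve_left hph
  exact Ideal.mem_span_singleton.2 ⟨z, mul_left_cancel₀ hp.ne_zero (by rw [hy]; ring)⟩

/-- Multiplication by `a` exhibits `R ⧸ (ab, J)` as an extension of `R ⧸ (a, J)` by
`R ⧸ (b, J)`. -/
lemma isSMulRegular_quotient_span_mul_sup {J : Ideal R} {a b s : R}
    (ha : IsSMulRegular (R ⧸ J) a) (hsa : IsSMulRegular (R ⧸ Ideal.span {a} ⊔ J) s)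
    (hsb : IsSMulRegular (R ⧸ Ideal.span {b} ⊔ J) s) :
    IsSMulRegular (R ⧸ Ideal.span {a * b} ⊔ J) s := by
  rw [isSMulRegular_quotient_iff_mem_of_smul_mem] at ha hsa hsb ⊢
  simp only [smul_eq_mul, Ideal.mem_span_singleton_sup] at ha hsa hsb ⊢
  rintro x ⟨α, u, hu, hαu⟩
  obtain ⟨y, v, hv, rfl⟩ := hsa x ⟨α * b, u, hu, by rw [← hαu]; ring⟩
  have hJ : s * y - α * b ∈ J := by
    refine ha _ ?_
    rw [show a * (s * y - α * b) = u - s * v by linear_combination -hαu]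
    exact J.sub_mem hu (J.mul_mem_left s hv)
  obtain ⟨β, w, hw, rfl⟩ := hsb y ⟨α, _, hJ, by ring⟩
  exact ⟨β, a * w + v, J.add_mem (J.mul_mem_left a hw) hv, by ring⟩

lemma isSMulRegular_quotient_span_prod_sup {J : Ideal R} {p : ι → R} {s : R} (T : Finset ι)
    (hp : ∀ i ∈ T, IsSMulRegular (R ⧸ J) (p i))
    (hs : ∀ i ∈ T, IsSMulRegular (R ⧸ Ideal.span {p i} ⊔ J) s) :
    IsSMulRegular (R ⧸ Ideal.span {∏ i ∈ T, p i} ⊔ J) s := by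
  induction T using Finset.cons_induction with
  | empty =>
    rw [isSMulRegular_quotient_iff_mem_of_smul_mem, Finset.prod_empty, Ideal.span_singleton_one,
      top_sup_eq]
    exact fun _ _ => Submodule.mem_top
  | cons i T hi ih =>
    rw [Finset.forall_mem_cons] at hp hs
    rw [Finset.prod_cons]
    exact isSMulRegular_quotient_span_mul_sup hp.1 hs.1 (ih hp.2 hs.2)

/-- By prime avoidance, the ideal of multipliers of `x` into `I` has an element outside all the
primes in `F`. -/
lemma mem_of_forall_exists_notMem_mul_mem {I : Ideal R} {F : Set (Ideal R)} (hfin : F.Finite)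
    (hprime : ∀ P ∈ F, P.IsPrime)
    (hreg : ∀ s, (∀ P ∈ F, s ∉ P) → IsSMulRegular (R ⧸ I) s) {x : R}
    (hx : ∀ P ∈ F, ∃ e ∉ P, e * x ∈ I) : x ∈ I := by
  have havoid : ¬ ((I.colon {x} : Set R) ⊆ ⋃ P ∈ F, (P : Set R)) := by
    rw [Ideal.subset_union_prime_finite (f := fun P => P) hfin ⊥ ⊥ fun P hP _ _ => hprime P hP]
    rintro ⟨P, hP, hle⟩
    obtain ⟨e, heP, hex⟩ := hx P hP
    exact heP (hle (Submodule.mem_colon_singleton.2 hex))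
  obtain ⟨s, hsx, hs⟩ := Set.not_subset.1 havoid
  simp only [Set.mem_iUnion, not_exists] at hs
  exact mem_of_isSMulRegular_quotient_of_smul_mem (hreg s hs)
    (Submodule.mem_colon_singleton.1 hsx)

lemma isPrimary_of_isSMulRegular_quotient {I : Ideal R} (hI : I ≠ ⊤)
    (hreg : ∀ s ∉ I.radical, IsSMulRegular (R ⧸ I) s) : I.IsPrimary := by
  refine Ideal.isPrimary_iff.2 ⟨hI, fun {x y} hxy => or_iff_not_imp_right.2 fun hy => ?_⟩
  exact mem_of_isSMulRegular_quotient_of_smul_mem (hreg y hy) (by rwa [smul_eq_mul, mul_comm])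

open scoped Pointwise in
lemma isRegular_pair_iff {f g : R} :
    RingTheory.Sequence.IsRegular R [f, g] ↔
      IsSMulRegular R f ∧ IsSMulRegular (R ⧸ Ideal.span {f}) g ∧ Ideal.span {f, g} ≠ ⊤ := by
  have htop : Ideal.ofList [f, g] = Ideal.span {f, g} := by
    simp [Ideal.ofList_cons, Ideal.span_insert]
  have hquot : f • (⊤ : Submodule R R) = Ideal.span {f} := by
    rw [← Submodule.ideal_span_singleton_smul, smul_eq_mul, Ideal.mul_top]
  rw [RingTheory.Sequence.isRegular_iff, RingTheory.Sequence.isWeaklyRegular_cons_iff,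
    RingTheory.Sequence.isWeaklyRegular_singleton_iff, and_assoc, htop, smul_eq_mul,
    Ideal.mul_top, ne_comm]
  change _ ∧ IsSMulRegular (R ⧸ (f • ⊤ : Submodule R R)) g ∧ _ ↔ _
  rw [hquot]

lemma height_span_pair_eq_two [IsDomain R] [IsNoetherianRing R] {a b : R} (ha : Prime a)
    (hab : ¬ a ∣ b) [(Ideal.span {a, b}).IsPrime] : (Ideal.span {a, b}).height = 2 := by
  have : (Ideal.span {a}).IsPrime := (Ideal.span_singleton_prime ha.ne_zero).2 ha
  have hlt : Ideal.span {a} < Ideal.span {a, b} := by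
    refine (Ideal.span_mono (by simp)).lt_of_not_ge fun hle => hab ?_
    exact Ideal.mem_span_singleton.1 (hle (Ideal.subset_span (by simp)))
  apply le_antisymm
  · have hmin : Ideal.span {a, b} ∈ (Ideal.span {a, b}).minimalPrimes := by
      simp [Ideal.minimalPrimes_eq_subsingleton_self]
    refine (Ideal.height_le_card_of_mem_minimalPrimes_span (Set.toFinite _) hmin).trans ?_
    exact_mod_cast (Set.ncard_insert_le a {b}).trans (by rw [Set.ncard_singleton])
  · have h1 := Ideal.one_le_height_span_singleton_of_mem_nonZeroDivisors
      (mem_nonZeroDivisors_of_ne_zero ha.ne_zero)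
    calc (2 : ℕ∞) = 1 + 1 := one_add_one_eq_two.symm
      _ ≤ (Ideal.span {a}).height + 1 := by gcongr
      _ ≤ _ := Ideal.height_add_one_le_of_lt_of_isPrime hlt

end RegularElements

section Derivations

variable {A R ι : Type*} [CommRing A] [CommRing R] [Algebra A R] (D : Derivation A R R)

/-- The ideal `(f, Df)`. When `D` is a directional derivative, it cuts out the intersection of
the hypersurface `f = 0` with its polar in that direction. -/
def derivIdeal (f : R) : Ideal R :=
  Ideal.span {f, D f}

lemma derivIdeal_mul_le (g e : R) : derivIdeal D (g * e) ≤ derivIdeal D g := by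
  have hg : g ∈ derivIdeal D g := Ideal.subset_span (by simp)
  have hDg : D g ∈ derivIdeal D g := Ideal.subset_span (by simp)
  rw [derivIdeal, Ideal.span_le, Set.pair_subset_iff, D.leibniz]
  exact ⟨Ideal.mul_mem_right _ _ hg,
    add_mem (Ideal.mul_mem_right _ _ hg) (Ideal.mul_mem_left _ _ hDg)⟩

lemma sq_mul_mem_derivIdeal_mul {g x : R} (e : R) (hx : x ∈ derivIdeal D g) :
    e ^ 2 * x ∈ derivIdeal D (g * e) := by
  obtain ⟨α, β, rfl⟩ := Ideal.mem_span_pair.1 hx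
  refine Ideal.mem_span_pair.2 ⟨α * e - β * D e, β * e, ?_⟩
  simp only [D.leibniz, smul_eq_mul]
  ring

variable {p : ι → R} {T : Finset ι} {i : ι}

lemma derivIdeal_prod_le_span_pair {j : ι} (hi : i ∈ T) (hj : j ∈ T) (hij : i ≠ j) :
    derivIdeal D (∏ k ∈ T, p k) ≤ Ideal.span {p i, p j} := by
  classical
  rw [← Finset.mul_prod_erase T p hi,
    ← Finset.mul_prod_erase (T.erase i) p (Finset.mem_erase.2 ⟨hij.symm, hj⟩), ← mul_assoc]
  refine (derivIdeal_mul_le D _ _).trans ?_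
  have hi' : p i ∈ Ideal.span {p i, p j} := Ideal.subset_span (by simp)
  have hj' : p j ∈ Ideal.span {p i, p j} := Ideal.subset_span (by simp)
  rw [derivIdeal, Ideal.span_le, Set.pair_subset_iff, D.leibniz]
  exact ⟨Ideal.mul_mem_right _ _ hi',
    add_mem (Ideal.mul_mem_right _ _ hi') (Ideal.mul_mem_right _ _ hj')⟩

lemma derivation_prod_eq_add_of_mem [DecidableEq ι] (hi : i ∈ T) :
    D (∏ j ∈ T, p j) = p i * D (∏ j ∈ T.erase i, p j) + (∏ j ∈ T.erase i, p j) * D (p i) := by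
  rw [← Finset.mul_prod_erase T p hi, D.leibniz, smul_eq_mul, smul_eq_mul]

/-- Modulo `p i`, only the term of the Leibniz rule that differentiates `p i` survives. -/
lemma span_singleton_sup_span_derivation_prod [DecidableEq ι] (hD : IsUnit (D (p i)))
    (hi : i ∈ T) :
    Ideal.span {p i} ⊔ Ideal.span {D (∏ j ∈ T, p j)} =
      Ideal.span {p i} ⊔ Ideal.span {∏ j ∈ T.erase i, p j} := by
  rw [derivation_prod_eq_add_of_mem D hi, ← Ideal.span_insert, Ideal.span_pair_left_mul_add,
    Ideal.span_insert, Ideal.span_singleton_mul_right_unit hD]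

lemma exists_span_pair_le_of_derivIdeal_prod_le (hD : ∀ i ∈ T, IsUnit (D (p i))) {q : Ideal R}
    [hq : q.IsPrime] (hle : derivIdeal D (∏ k ∈ T, p k) ≤ q) :
    ∃ i ∈ T, ∃ j ∈ T, i ≠ j ∧ Ideal.span {p i, p j} ≤ q := by
  classical
  rw [derivIdeal, Ideal.span_le, Set.pair_subset_iff] at hle
  obtain ⟨i, hi, hiq⟩ := hq.prod_mem_iff.1 hle.1
  have hpq : Ideal.span {p i} ⊔ Ideal.span {D (∏ k ∈ T, p k)} ≤ q :=
    sup_le ((Ideal.span_singleton_le_iff_mem q).2 hiq)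
      ((Ideal.span_singleton_le_iff_mem q).2 hle.2)
  rw [span_singleton_sup_span_derivation_prod D (hD i hi) hi] at hpq
  obtain ⟨j, hj, hjq⟩ := hq.prod_mem_iff.1
    ((Ideal.span_singleton_le_iff_mem q).1 (le_sup_right.trans hpq))
  obtain ⟨hji, hjT⟩ := Finset.mem_erase.1 hj
  exact ⟨i, hi, j, hjT, hji.symm, Ideal.span_le.2 (Set.pair_subset hiq hjq)⟩

end Derivations

section Arrangements

variable {A R ι : Type*} [CommRing A] [CommRing R] [Algebra A R]

/-- A family of elements of `R` behaves like the equations of a hyperplane arrangement: each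
generates a prime ideal, none divides another, and any two of them generate a prime ideal (that
of a codimension-two flat). -/
structure IsArrangement (p : ι → R) : Prop where
  prime (i : ι) : Prime (p i)
  not_dvd {i j : ι} : i ≠ j → ¬ p i ∣ p j
  isPrime_span_pair {i j : ι} : i ≠ j → (Ideal.span {p i, p j}).IsPrime

/-- The ideals of the codimension-two flats of the arrangement `p`. -/
def strata (p : ι → R) : Set (Ideal R) :=
  {P | ∃ i j, i ≠ j ∧ P = Ideal.span {p i, p j}}

open Classical in
/-- The equation of the localization of the arrangement `p` at the flat with ideal `P`: the
product of the members of `p` that vanish on the flat. -/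
noncomputable def localFactor [Fintype ι] (p : ι → R) (P : Ideal R) : R :=
  ∏ i ∈ Finset.univ.filter (fun i => p i ∈ P), p i

lemma finite_strata [Finite ι] (p : ι → R) : (strata p).Finite := by
  refine (Set.finite_range fun ij : ι × ι => Ideal.span {p ij.1, p ij.2}).subset ?_
  rintro _ ⟨i, j, -, rfl⟩
  exact ⟨(i, j), rfl⟩

namespace IsArrangement

variable {D : Derivation A R R} {p : ι → R} (hp : IsArrangement p)
include hp

lemma isPrime_of_mem_strata {P : Ideal R} (hP : P ∈ strata p) : P.IsPrime := by
  obtain ⟨i, j, hij, rfl⟩ := hP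
  exact hp.isPrime_span_pair hij

lemma not_dvd_derivation_prod {i : ι} (hDi : IsUnit (D (p i))) {T : Finset ι} (hi : i ∈ T) :
    ¬ p i ∣ D (∏ j ∈ T, p j) := by
  classical
  rw [derivation_prod_eq_add_of_mem D hi, dvd_add_right (dvd_mul_right _ _), hDi.dvd_mul_right]
  intro hdvd
  obtain ⟨j, hj, hij⟩ := (hp.prime i).exists_mem_finset_dvd hdvd
  exact hp.not_dvd (Finset.ne_of_mem_erase hj).symm hij

lemma isSMulRegular_derivIdeal_prod [IsDomain R] {T : Finset ι} (hD : ∀ i ∈ T, IsUnit (D (p i)))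
    {s : R} (hs : ∀ i ∈ T, ∀ j ∈ T, i ≠ j → s ∉ Ideal.span {p i, p j}) :
    IsSMulRegular (R ⧸ derivIdeal D (∏ k ∈ T, p k)) s := by
  classical
  rw [derivIdeal, Ideal.span_insert]
  refine isSMulRegular_quotient_span_prod_sup T (fun i hi => ?_) fun i hi => ?_
  · exact isSMulRegular_quotient_span_singleton_of_prime (hp.prime i)
      (hp.not_dvd_derivation_prod (hD i hi) hi)
  · have := (Ideal.span_singleton_prime (hp.prime i).ne_zero).2 (hp.prime i)
    rw [span_singleton_sup_span_derivation_prod D (hD i hi) hi, sup_comm]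
    refine isSMulRegular_quotient_span_prod_sup _ (fun j hj => ?_) fun j hj => ?_
    · exact isSMulRegular_quotient_of_notMem _ fun hji =>
        hp.not_dvd (Finset.ne_of_mem_erase hj).symm (Ideal.mem_span_singleton.1 hji)
    · obtain ⟨hji, hjT⟩ := Finset.mem_erase.1 hj
      have := hp.isPrime_span_pair hji
      rw [← Ideal.span_insert]
      exact isSMulRegular_quotient_of_notMem _ (hs j hjT i hi hji)

lemma isRegular_prod_derivation_prod [IsDomain R] [Fintype ι] [Nontrivial ι]
    (hD : ∀ i, IsUnit (D (p i))) :
    RingTheory.Sequence.IsRegular R [∏ i, p i, D (∏ i, p i)] := by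
  rw [isRegular_pair_iff]
  refine ⟨?_, ?_, ?_⟩
  · exact (IsRegular.of_ne_zero
      (Finset.prod_ne_zero_iff.2 fun i _ => (hp.prime i).ne_zero)).isSMulRegular
  · rw [← sup_bot_eq (Ideal.span {∏ i, p i})]
    refine isSMulRegular_quotient_span_prod_sup _ (fun i _ => ?_) fun i _ => ?_
    · exact isSMulRegular_quotient_of_notMem _ (hp.prime i).ne_zero
    · have := (Ideal.span_singleton_prime (hp.prime i).ne_zero).2 (hp.prime i)
      rw [sup_bot_eq]
      exact isSMulRegular_quotient_of_notMem _ fun hdvd =>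
        hp.not_dvd_derivation_prod (hD i) (Finset.mem_univ i) (Ideal.mem_span_singleton.1 hdvd)
  · obtain ⟨i, j, hij⟩ := exists_pair_ne ι
    exact ne_top_of_le_ne_top (hp.isPrime_span_pair hij).ne_top
      (derivIdeal_prod_le_span_pair D (Finset.mem_univ i) (Finset.mem_univ j) hij)

lemma span_pair_eq_of_le [IsDomain R] [IsNoetherianRing R] {P : Ideal R} (hP : P ∈ strata p)
    {i j : ι} (hij : i ≠ j) (hle : Ideal.span {p i, p j} ≤ P) : Ideal.span {p i, p j} = P := by
  obtain ⟨k, l, hkl, rfl⟩ := hP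
  have := hp.isPrime_span_pair hij
  have := hp.isPrime_span_pair hkl
  refine Ideal.eq_of_le_of_height_le _ hle ?_
  rw [height_span_pair_eq_two (hp.prime i) (hp.not_dvd hij),
    height_span_pair_eq_two (hp.prime k) (hp.not_dvd hkl)]

variable [Fintype ι] {P : Ideal R}

omit hp in
lemma derivIdeal_localFactor_le (D : Derivation A R R) (hP : P ∈ strata p) :
    derivIdeal D (localFactor p P) ≤ P := by
  classical
  obtain ⟨i, j, hij, rfl⟩ := hP
  refine derivIdeal_prod_le_span_pair D ?_ ?_ hij <;>
    exact Finset.mem_filter.2 ⟨Finset.mem_univ _, Ideal.subset_span (by simp)⟩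

variable [IsDomain R] [IsNoetherianRing R] (hD : ∀ i, IsUnit (D (p i)))
include hD

lemma le_of_derivIdeal_localFactor_le (hP : P ∈ strata p) {q : Ideal R} [q.IsPrime]
    (hle : derivIdeal D (localFactor p P) ≤ q) : P ≤ q := by
  classical
  obtain ⟨i, hi, j, hj, hij, hijq⟩ :=
    exists_span_pair_le_of_derivIdeal_prod_le D (fun i _ => hD i) hle
  have hijP : Ideal.span {p i, p j} ≤ P :=
    Ideal.span_le.2 (Set.pair_subset (Finset.mem_filter.1 hi).2 (Finset.mem_filter.1 hj).2)
  rwa [hp.span_pair_eq_of_le hP hij hijP] at hijq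

lemma radical_derivIdeal_localFactor (hP : P ∈ strata p) :
    (derivIdeal D (localFactor p P)).radical = P := by
  refine le_antisymm ?_ ?_
  · exact (hp.isPrime_of_mem_strata hP).radical_le_iff.2 (derivIdeal_localFactor_le D hP)
  · rw [Ideal.radical_eq_sInf]
    refine le_sInf ?_
    rintro q ⟨hle, hq⟩
    exact hp.le_of_derivIdeal_localFactor_le hD hP hle

lemma isPrimary_derivIdeal_localFactor (hP : P ∈ strata p) :
    (derivIdeal D (localFactor p P)).IsPrimary := by
  classical
  refine isPrimary_of_isSMulRegular_quotient ?_ fun s hs => ?_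
  · exact ne_top_of_le_ne_top (hp.isPrime_of_mem_strata hP).ne_top
      (derivIdeal_localFactor_le D hP)
  · rw [hp.radical_derivIdeal_localFactor hD hP] at hs
    refine hp.isSMulRegular_derivIdeal_prod (fun i _ => hD i) fun i hi j hj _ hsij => hs ?_
    exact Ideal.span_le.2
      (Set.pair_subset (Finset.mem_filter.1 hi).2 (Finset.mem_filter.1 hj).2) hsij

omit [IsNoetherianRing R] in
lemma derivIdeal_prod_eq_iInf :
    derivIdeal D (∏ i, p i) = ⨅ P ∈ strata p, derivIdeal D (localFactor p P) := by
  classical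
  have hfactor (P : Ideal R) :
      ∏ i, p i = localFactor p P * ∏ i ∈ Finset.univ.filter (fun i => p i ∉ P), p i := by
    rw [localFactor, Finset.prod_filter_mul_prod_filter_not]
  refine le_antisymm (le_iInf₂ fun P _ => ?_) fun x hx => ?_
  · rw [hfactor P]
    exact derivIdeal_mul_le D _ _
  · refine mem_of_forall_exists_notMem_mul_mem (finite_strata p)
      (fun P hP => hp.isPrime_of_mem_strata hP) (fun s hs => ?_) fun P hP => ?_
    · exact hp.isSMulRegular_derivIdeal_prod (fun i _ => hD i) fun i _ j _ hij =>
        hs _ ⟨i, j, hij, rfl⟩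
    · have hprime := hp.isPrime_of_mem_strata hP
      refine ⟨(∏ i ∈ Finset.univ.filter (fun i => p i ∉ P), p i) ^ 2, fun hmem => ?_, ?_⟩
      · obtain ⟨i, hi, hiP⟩ := hprime.prod_mem_iff.1 (hprime.mem_of_pow_mem _ hmem)
        exact (Finset.mem_filter.1 hi).2 hiP
      · rw [hfactor P]
        exact sq_mul_mem_derivIdeal_mul D _ ((Submodule.mem_iInf _).1
          ((Submodule.mem_iInf _).1 hx P) hP)

lemma not_iInf_derivIdeal_localFactor_le (hP : P ∈ strata p) :
    ¬ (⨅ Q ∈ strata p \ {P}, derivIdeal D (localFactor p Q)) ≤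
      derivIdeal D (localFactor p P) := by
  intro hle
  have hprime := hp.isPrime_of_mem_strata hP
  have hfin := (finite_strata p).subset (Set.sdiff_subset (t := {P}))
  have hinf : hfin.toFinset.inf (fun Q => derivIdeal D (localFactor p Q)) ≤ P := by
    simpa [Finset.inf_eq_iInf] using hle.trans (derivIdeal_localFactor_le D hP)
  obtain ⟨Q, hQ, hQP⟩ := hprime.inf_le'.1 hinf
  rw [hfin.mem_toFinset] at hQ
  have hQP' : Q ≤ P := hp.le_of_derivIdeal_localFactor_le hD hQ.1 hQP
  obtain ⟨⟨i, j, hij, rfl⟩, hne⟩ := hQ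
  exact hne (hp.span_pair_eq_of_le hP hij hQP')

end IsArrangement

end Arrangements

section LinearForms

lemma eq_of_isHomogeneous_one {σ R M : Type*} [CommSemiring R] [AddCommMonoid M] [Module R M]
    {φ ψ : MvPolynomial σ R →ₗ[R] M} (hX : ∀ k, φ (X k) = ψ (X k)) {f : MvPolynomial σ R}
    (hf : f.IsHomogeneous 1) : φ f = ψ f := by
  have hmem : f ∈ Submodule.span R (Set.range X) := by
    rwa [← homogeneousSubmodule_one_eq_span_X, mem_homogeneousSubmodule]
  exact LinearMap.eqOn_span (by rintro _ ⟨k, rfl⟩; exact hX k) hmem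

variable {σ K : Type*} [Field K]

/-- The zero locus of a set of linear forms is a linear space, so its coordinate ring is a
retract of the polynomial ring: subtract from each variable its projection to the span of `U`. -/
lemma exists_algHom_ker_eq_span {U : Set (MvPolynomial σ K)}
    (hU : ∀ u ∈ U, u.IsHomogeneous 1) :
    ∃ φ : MvPolynomial σ K →ₐ[K] MvPolynomial σ K, RingHom.ker φ = Ideal.span U ∧
      ∀ f : MvPolynomial σ K, f.IsHomogeneous 1 → f - φ f ∈ Submodule.span K U := by
  obtain ⟨π, hπ⟩ := (Submodule.span K U).subtype.exists_leftInverse_of_injective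
    (Submodule.span K U).ker_subtype
  have hπU (u) (hu : u ∈ Submodule.span K U) : (π u : MvPolynomial σ K) = u :=
    congrArg Subtype.val (LinearMap.congr_fun hπ ⟨u, hu⟩)
  let φ : MvPolynomial σ K →ₐ[K] MvPolynomial σ K :=
    aeval fun k => X k - (π (X k) : MvPolynomial σ K)
  have hφ (f : MvPolynomial σ K) (hf : f.IsHomogeneous 1) : φ f + π f = f :=
    eq_of_isHomogeneous_one (φ := φ.toLinearMap + (Submodule.span K U).subtype ∘ₗ π)
      (ψ := LinearMap.id) (fun k => by simp [φ]) hf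
  have hspan : Submodule.span K U ≤ (Ideal.span U).restrictScalars K :=
    Submodule.span_le_restrictScalars K _ U
  refine ⟨φ, le_antisymm (fun f hf => ?_) (Ideal.span_le.2 fun u hu => ?_), fun f hf => ?_⟩
  · have hmk : (Ideal.Quotient.mkₐ K (Ideal.span U)).comp φ = Ideal.Quotient.mkₐ K _ :=
      algHom_ext fun k => by
        simpa [φ] using Ideal.Quotient.eq_zero_iff_mem.2 (hspan (π (X k)).2)
    have hf0 : φ f = 0 := hf
    have := DFunLike.congr_fun hmk f
    rw [AlgHom.comp_apply, hf0, map_zero] at this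
    exact Ideal.Quotient.eq_zero_iff_mem.1 this.symm
  · have hu' := hφ u (hU u hu)
    rwa [hπU u (Submodule.subset_span hu), add_eq_right] at hu'
  · rw [sub_eq_of_eq_add' (hφ f hf).symm]
    exact (π f).2

lemma isPrime_span_of_isHomogeneous_one {U : Set (MvPolynomial σ K)}
    (hU : ∀ u ∈ U, u.IsHomogeneous 1) : (Ideal.span U).IsPrime := by
  obtain ⟨φ, hker, -⟩ := exists_algHom_ker_eq_span hU
  rw [← hker]
  exact RingHom.ker_isPrime φ

lemma mem_span_of_mem_ideal_span_of_isHomogeneous_one {U : Set (MvPolynomial σ K)}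
    (hU : ∀ u ∈ U, u.IsHomogeneous 1) {f : MvPolynomial σ K} (hf : f.IsHomogeneous 1)
    (hfU : f ∈ Ideal.span U) : f ∈ Submodule.span K U := by
  obtain ⟨φ, hker, hφ⟩ := exists_algHom_ker_eq_span hU
  have hφf : φ f = 0 := by rwa [← hker] at hfU
  simpa only [hφf, sub_zero] using hφ f hf

lemma isArrangement_of_isHomogeneous_one {ι : Type*} {L : ι → MvPolynomial σ K}
    (hhom : ∀ i, (L i).IsHomogeneous 1) (hne : ∀ i, L i ≠ 0)
    (hprop : ∀ i j, i ≠ j → ∀ c : K, L i ≠ c • L j) : IsArrangement L where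
  prime i := (Ideal.span_singleton_prime (hne i)).1
    (isPrime_span_of_isHomogeneous_one (by simpa using hhom i))
  not_dvd {i j} hij hdvd := by
    have hmem : L j ∈ Submodule.span K {L i} :=
      mem_span_of_mem_ideal_span_of_isHomogeneous_one (by simpa using hhom i) (hhom j)
        (Ideal.mem_span_singleton.2 hdvd)
    obtain ⟨c, hc⟩ := Submodule.mem_span_singleton.1 hmem
    exact hprop j i hij.symm c hc.symm
  isPrime_span_pair {i j} _ :=
    isPrime_span_of_isHomogeneous_one (by simpa using ⟨hhom i, hhom j⟩)

end LinearForms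

section DirectionalDerivative

variable {K : Type*} {m : ℕ}

/-- The directional derivative `lderiv a` as a derivation of the polynomial ring. -/
noncomputable def lderivation [CommRing K] (a : Fin m → K) :
    Derivation K (MvPolynomial (Fin m) K) (MvPolynomial (Fin m) K) :=
  ∑ i, a i • pderiv i

lemma lderivation_apply [CommRing K] (a : Fin m → K) (f : MvPolynomial (Fin m) K) :
    lderivation a f = lderiv a f := by
  rw [lderivation, lderiv, ← Derivation.coeFnAddMonoidHom_apply, map_sum, Finset.sum_apply]
  rfl

lemma lderivation_eq_C_eval_of_isHomogeneous_one [CommRing K] {a : Fin m → K}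
    {f : MvPolynomial (Fin m) K} (hf : f.IsHomogeneous 1) :
    lderivation a f = C (eval a f) := by
  refine eq_of_isHomogeneous_one (φ := (lderivation a).toLinearMap)
    (ψ := Algebra.linearMap K _ ∘ₗ (aeval a).toLinearMap) (fun k => ?_) hf
  change lderivation a (X k) = C (aeval a (X k : MvPolynomial (Fin m) K))
  simp [lderivation_apply, lderiv, pderiv_X, Pi.single_apply, smul_eq_C_mul]

lemma isUnit_lderivation_of_isHomogeneous_one [Field K] {a : Fin m → K}
    {f : MvPolynomial (Fin m) K} (hf : f.IsHomogeneous 1) (ha : eval a f ≠ 0) :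
    IsUnit (lderivation a f) := by
  rw [lderivation_eq_C_eval_of_isHomogeneous_one hf]
  exact ha.isUnit.map C

end DirectionalDerivative

theorem stmt_3_general {K : Type*} [Field K] {m d : ℕ} (hd : 2 ≤ d)
    (L : Fin d → MvPolynomial (Fin m) K) (hhom : ∀ i, (L i).IsHomogeneous 1)
    (hprop : ∀ i j, i ≠ j → ∀ c : K, L i ≠ c • L j) (a : Fin m → K)
    (ha : ∀ i, eval a (L i) ≠ 0) :
    RingTheory.Sequence.IsRegular (MvPolynomial (Fin m) K)
      [∏ i, L i, lderiv a (∏ i, L i)] ∧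
    (Ideal.span {∏ i, L i, lderiv a (∏ i, L i)} =
      ⨅ P ∈ singSupp L, Ideal.span {gOf L P, lderiv a (gOf L P)}) ∧
    (∀ P ∈ singSupp L,
      (Ideal.span {gOf L P, lderiv a (gOf L P)}).IsPrimary ∧
      (Ideal.span {gOf L P, lderiv a (gOf L P)}).radical = P) ∧
    (∀ P ∈ singSupp L,
      ¬ (⨅ P' ∈ singSupp L \ {P}, Ideal.span {gOf L P', lderiv a (gOf L P')}) ≤
        Ideal.span {gOf L P, lderiv a (gOf L P)}) := by
  have hL : IsArrangement L := isArrangement_of_isHomogeneous_one hhom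
    (fun i hi => ha i (by rw [hi, map_zero])) hprop
  have hD (i : Fin d) : IsUnit (lderivation a (L i)) :=
    isUnit_lderivation_of_isHomogeneous_one (hhom i) (ha i)
  have : Nontrivial (Fin d) := Fin.nontrivial_iff_two_le.2 hd
  simp only [← lderivation_apply]
  exact ⟨hL.isRegular_prod_derivation_prod hD, hL.derivIdeal_prod_eq_iInf hD,
    fun P hP => ⟨hL.isPrimary_derivIdeal_localFactor hD hP,
      hL.radical_derivIdeal_localFactor hD hP⟩,
    fun P hP => hL.not_iInf_derivIdeal_localFactor_le hD hP⟩

/-- Let `K` have characteristic zero and let `A = A(f_A)` be a hyperplane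
arrangement of `d ≥ 2` hyperplanes in `ℙⁿ`, given by pairwise non-proportional linear
forms `L 0, …, L (d-1)` with `f_A = Π L i`.  For a general linear form `ℓ` (i.e. for all
`ℓ` whose coefficient vector lies in a nonempty basic Zariski-open subset of `K^{n+1}`),
the pair `f_A, ∂f_A/∂ℓ` is a regular sequence in `S`, and
`(f_A, ∂f_A/∂ℓ) = ⋂_{P ∈ S(A)} (g_P, ∂g_P/∂ℓ)` is the minimal primary decomposition:
each `(g_P, ∂g_P/∂ℓ)` is a primary ideal with radical `I_P`, and no component is
superfluous. -/
theorem stmt_3 {K : Type*} [Field K] [CharZero K] {n d : ℕ} (hn : 1 ≤ n) (hd : 2 ≤ d)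
    (L : Fin d → MvPolynomial (Fin (n + 1)) K)
    (hhom : ∀ i, (L i).IsHomogeneous 1) (hne : ∀ i, L i ≠ 0)
    (hprop : ∀ i j, i ≠ j → ∀ c : K, L i ≠ c • L j) :
    ∃ p : MvPolynomial (Fin (n + 1)) K, p ≠ 0 ∧
      ∀ a : Fin (n + 1) → K, eval a p ≠ 0 →
        RingTheory.Sequence.IsRegular (MvPolynomial (Fin (n + 1)) K)
          [∏ i, L i, lderiv a (∏ i, L i)] ∧
        (Ideal.span {∏ i, L i, lderiv a (∏ i, L i)} =
          ⨅ P ∈ singSupp L, Ideal.span {gOf L P, lderiv a (gOf L P)}) ∧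
        (∀ P ∈ singSupp L,
          (Ideal.span {gOf L P, lderiv a (gOf L P)}).IsPrimary ∧
          (Ideal.span {gOf L P, lderiv a (gOf L P)}).radical = P) ∧
        (∀ P ∈ singSupp L,
          ¬ (⨅ P' ∈ singSupp L \ {P}, Ideal.span {gOf L P', lderiv a (gOf L P')}) ≤
            Ideal.span {gOf L P, lderiv a (gOf L P)}) := by
  refine ⟨∏ i, L i, Finset.prod_ne_zero_iff.2 fun i _ => hne i, fun a ha => ?_⟩
  rw [map_prod, Finset.prod_ne_zero_iff] at ha
  exact stmt_3_general hd L hhom hprop a fun i => ha i (Finset.mem_univ i)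
end

section
/- Let K have characteristic zero and let g ∈ K[x₀,…,xₙ] be a product of t ≥ 2 distinct (pairwise non-proportional) linear forms, all lying in the K-span of x₀ and x₁ (so g vanishes on the codimension-two subspace P = {x₀ = x₁ = 0}). For a general linear form ℓ = Σᵢaᵢxᵢ, set ℓ_P := a₁x₀ − a₀x₁ (a linear form defining the hyperplane spanned by P and the dual point ℓ∨). Then (g, ∂g/∂ℓ) : (∂g/∂x₀, ∂g/∂x₁) = (ℓ_P, ∂g/∂ℓ) = (ℓ_P, g/λ), where λ is any linear divisor of g. Here (∂g/∂x₀, ∂g/∂x₁) coincides with the Jacobian ideal Jac(g), since all other partial derivatives of g vanish. -/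
open MvPolynomial

/-!
Let `λ` be a linear form in `xᵢ, xⱼ` and `g` a form of degree `t` in the same variables. The values
of the derivations `∂/∂ℓ` and `xᵢ∂ᵢ + xⱼ∂ⱼ` at `λ` and `g` form a 2 × 2 matrix which is the product
of the matrix with rows `(aᵢ, aⱼ)`, `(xᵢ, xⱼ)` and the Jacobian matrix of `(λ, g)`. Taking
determinants and using Euler's identity,
`t·λ(a)·g = λ·∂g/∂ℓ - ℓ_P·J(λ, g)`, where `J(λ, g) = ∂ᵢλ·∂ⱼg - ∂ⱼλ·∂ᵢg`.
Suppose `λ(a) ≠ 0`. Then `(g, ∂g/∂ℓ) = (ℓ_P·J(λ, g), ∂g/∂ℓ)`, while `∂g/∂ℓ` and `J(λ, g)` generate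
`Jac(g)`. If `g` is coprime to `∂g/∂ℓ`, then so is `J(λ, g)`, and it can be cancelled modulo
`∂g/∂ℓ`, which gives the colon ideal. If moreover `g = λh`, then `J(λ, g) = λ·J(λ, h)`, and dividing
the identity by `λ` gives `t·λ(a)·h = ∂g/∂ℓ - ℓ_P·J(λ, h)`, so `(ℓ_P, ∂g/∂ℓ) = (ℓ_P, h)`.
The coprimality holds for a product `g` of pairwise non-proportional linear forms with `g(a) ≠ 0`:
modulo a factor `λ`, `∂g/∂ℓ` is the nonzero constant `λ(a)` times the product of the others.
-/

section Ideals

variable {A : Type*} [CommRing A]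

theorem span_pair_eq_of_unit_mul_eq_add {u x y z w : A} (hu : IsUnit u) (h : u * y = z + w * x) :
    Ideal.span {x, y} = Ideal.span {x, z} := by
  rw [← Ideal.span_pair_add_mul_left (x := x) (y := z) (z := w), ← h, Ideal.span_insert,
    Ideal.span_insert, Ideal.span_singleton_mul_left_unit hu]

theorem span_pair_eq_of_isUnit_det {a b c d : A} (x y : A) (hdet : IsUnit (a * d - b * c)) :
    Ideal.span {a * x + b * y, c * x + d * y} = Ideal.span {x, y} := by
  obtain ⟨v, hv⟩ := hdet.exists_left_inv
  apply le_antisymm <;>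
    simp only [Ideal.span_le, Set.insert_subset_iff, Set.singleton_subset_iff, SetLike.mem_coe,
      Ideal.mem_span_pair]
  · exact ⟨⟨a, b, rfl⟩, c, d, rfl⟩
  · exact ⟨⟨v * d, -(v * b), by linear_combination x * hv⟩,
      -(v * c), v * a, by linear_combination y * hv⟩

theorem colon_span_mul_pair_of_isRelPrime [DecompositionMonoid A] {D B : A} (m : A)
    (h : IsRelPrime D B) :
    (Ideal.span {D, m * B}).colon (Ideal.span {D, B} : Ideal A) = Ideal.span {m, D} := by
  ext f
  simp only [Ideal.colon_span, Submodule.mem_colon, Set.forall_mem_insert, Set.mem_singleton_iff,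
    forall_eq, smul_eq_mul, Ideal.mem_span_pair]
  constructor
  · rintro ⟨-, p, q, hpq⟩
    obtain ⟨r, hr⟩ : D ∣ f - q * m :=
      h.dvd_of_dvd_mul_right ⟨p, by linear_combination -hpq⟩
    exact ⟨q, r, by linear_combination -hr⟩
  · rintro ⟨p, q, rfl⟩
    exact ⟨⟨p * m + q * D, 0, by ring⟩, q * B, p, by ring⟩

end Ideals

theorem isRelPrime_prod_derivation_prod {R A ι : Type*} [CommSemiring R] [CommRing A] [Algebra R A]
    [DecompositionMonoid A] (δ : Derivation R A A) {s : Finset ι} {f : ι → A}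
    (hf : (s : Set ι).Pairwise fun k l => IsRelPrime (f k) (f l))
    (hδ : ∀ k ∈ s, IsUnit (δ (f k))) :
    IsRelPrime (∏ k ∈ s, f k) (δ (∏ k ∈ s, f k)) := by
  classical
  refine IsRelPrime.prod_left fun k hk => ?_
  have hcoprime : IsRelPrime (f k) (∏ l ∈ s.erase k, f l) :=
    IsRelPrime.prod_right fun l hl =>
      hf hk (Finset.mem_of_mem_erase hl) (Finset.ne_of_mem_erase hl).symm
  rw [← Finset.mul_prod_erase s f hk, Derivation.leibniz, smul_eq_mul, smul_eq_mul,
    IsRelPrime.mul_add_left_right_iff]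
  exact (isRelPrime_mul_unit_right_right (hδ k hk)).2 hcoprime

section LinearForms

variable {σ K : Type*} [Field K] {p q : MvPolynomial σ K}

theorem irreducible_of_isHomogeneous_one (hp : p.IsHomogeneous 1) (hp0 : p ≠ 0) :
    Irreducible p := by
  refine irreducible_of_totalDegree_eq_one (hp.totalDegree hp0) fun x hx => ?_
  obtain ⟨d, hd⟩ := ne_zero_iff.1 hp0
  exact (ne_zero_of_dvd_ne_zero hd (hx d)).isUnit

theorem isRelPrime_of_isHomogeneous_one (hp : p.IsHomogeneous 1) (hq : q.IsHomogeneous 1)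
    (hq0 : q ≠ 0) (hpq : ∀ c : K, p ≠ c • q) : IsRelPrime p q := by
  refine ((irreducible_of_isHomogeneous_one hq hq0).isRelPrime_iff_not_dvd.2 ?_).symm
  rintro ⟨r, rfl⟩
  have hr0 : r ≠ 0 := by
    rintro rfl
    exact hpq 0 (by simp)
  have hdeg := totalDegree_mul_of_isDomain hq0 hr0
  rw [hp.totalDegree (mul_ne_zero hq0 hr0), hq.totalDegree hq0] at hdeg
  obtain ⟨c, rfl⟩ : ∃ c, r = C c := ⟨_, totalDegree_eq_zero_iff_eq_C.1 (by omega)⟩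
  exact hpq c (by rw [smul_eq_C_mul, mul_comm])

end LinearForms

section SpanOfTwoVariables

variable {R σ : Type*} [CommRing R] {i j : σ} {p : MvPolynomial σ R}

theorem isHomogeneous_one_of_mem_span_X_pair (hp : p ∈ Submodule.span R {X i, X j}) :
    p.IsHomogeneous 1 := by
  have hle : Submodule.span R {X i, X j} ≤ homogeneousSubmodule σ R 1 := by
    simp [Submodule.span_le, Set.insert_subset_iff, isHomogeneous_X]
  exact hle hp

theorem mem_supported_of_mem_span_X_pair (hp : p ∈ Submodule.span R {X i, X j}) :
    p ∈ supported R {i, j} := by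
  rw [supported_eq_adjoin_X, Set.image_pair]
  exact Algebra.span_le_adjoin R _ hp

end SpanOfTwoVariables

section LinearDerivative

variable {R : Type*} [CommRing R] {m : ℕ}

theorem lderiv_eq_mkDerivation (a : Fin m → R) (f : MvPolynomial (Fin m) R) :
    lderiv a f = mkDerivation R (fun i => C (a i)) f := by
  let δ : Derivation R (MvPolynomial (Fin m) R) (MvPolynomial (Fin m) R) := ∑ i, a i • pderiv i
  have hδ (f) : δ f = lderiv a f := by
    simp only [δ, lderiv, ← Derivation.coeFnAddMonoidHom_apply, map_sum, Finset.sum_apply]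
    rfl
  have hX : δ = mkDerivation R fun i => C (a i) :=
    derivation_ext fun k => by simp [hδ, lderiv, Pi.single_apply, smul_eq_C_mul]
  rw [← hδ, hX]

theorem lderiv_eq_C_eval {p : MvPolynomial (Fin m) R} (a : Fin m → R) (hp : p.IsHomogeneous 1) :
    lderiv a p = C (eval a p) := by
  have hconst (i : Fin m) : ∃ c, pderiv i p = C c :=
    ⟨_, (totalDegree_eq_zero_iff_eq_C).1 ((totalDegree_zero_iff_isHomogeneous _).2 hp.pderiv)⟩
  choose c hc using hconst
  have heuler : eval a p = ∑ i, a i * c i := by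
    simpa [hc] using congrArg (eval a) hp.sum_X_mul_pderiv.symm
  simp [lderiv, hc, heuler, smul_eq_C_mul]

end LinearDerivative

section TwoVariables

variable {R σ : Type*} [CommRing R] {i j : σ} {f g : MvPolynomial σ R}

/-- The Jacobian determinant `∂(f, g)/∂(xᵢ, xⱼ)`. -/
noncomputable def jacobianDet (i j : σ) (f g : MvPolynomial σ R) : MvPolynomial σ R :=
  pderiv i f * pderiv j g - pderiv j f * pderiv i g

theorem jacobianDet_self_mul (i j : σ) (f g : MvPolynomial σ R) :
    jacobianDet i j f (f * g) = f * jacobianDet i j f g := by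
  simp only [jacobianDet, pderiv_mul]
  ring

theorem pderiv_eq_zero_of_mem_supported_pair (hf : f ∈ supported R {i, j}) {k : σ}
    (hk : k ≠ i ∧ k ≠ j) : pderiv k f = 0 :=
  pderiv_eq_zero_of_notMem_vars fun hmem => by simpa [hk] using mem_supported.1 hf hmem

theorem span_pderiv_pair_eq_span_range (hf : f ∈ supported R {i, j}) :
    Ideal.span {pderiv i f, pderiv j f} = Ideal.span (Set.range fun k => pderiv k f) := by
  apply le_antisymm
  · refine Ideal.span_mono ?_
    rintro _ (rfl | rfl)
    exacts [⟨i, rfl⟩, ⟨j, rfl⟩]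
  · rw [Ideal.span_le]
    rintro _ ⟨k, rfl⟩
    by_cases hk : k ≠ i ∧ k ≠ j
    · simp [pderiv_eq_zero_of_mem_supported_pair hf hk]
    · obtain rfl | rfl := or_iff_not_and_not.2 hk
      exacts [Ideal.subset_span (by simp), Ideal.subset_span (by simp)]

theorem natCast_mul_eq_X_mul_pderiv_add [Finite σ] (hij : i ≠ j) {d : ℕ}
    (hf : f ∈ supported R {i, j}) (hd : f.IsHomogeneous d) :
    (d : MvPolynomial σ R) * f = X i * pderiv i f + X j * pderiv j f := by
  have := Fintype.ofFinite σ
  rw [← nsmul_eq_mul, ← hd.sum_X_mul_pderiv]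
  refine Fintype.sum_eq_add i j hij fun k hk => ?_
  rw [pderiv_eq_zero_of_mem_supported_pair hf hk, mul_zero]

theorem lderiv_eq_C_mul_pderiv_add {m : ℕ} {i j : Fin m} {f : MvPolynomial (Fin m) R}
    (hij : i ≠ j) (a : Fin m → R) (hf : f ∈ supported R {i, j}) :
    lderiv a f = C (a i) * pderiv i f + C (a j) * pderiv j f := by
  simp only [lderiv, smul_eq_C_mul]
  refine Fintype.sum_eq_add i j hij fun k hk => ?_
  rw [pderiv_eq_zero_of_mem_supported_pair hf hk, mul_zero]

end TwoVariables

section Forms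

variable {R : Type*} [CommRing R] {m : ℕ} {i j : Fin m}
  {p g h : MvPolynomial (Fin m) R} {t : ℕ}

theorem C_mul_eq_mul_lderiv_sub_mul_jacobianDet (hij : i ≠ j) (a : Fin m → R)
    (hp : p ∈ Submodule.span R {X i, X j}) (hg : g ∈ supported R {i, j})
    (hgt : g.IsHomogeneous t) :
    C (t * eval a p) * g =
      p * lderiv a g - (C (a j) * X i - C (a i) * X j) * jacobianDet i j p g := by
  have hp' := mem_supported_of_mem_span_X_pair hp
  have hp1 := isHomogeneous_one_of_mem_span_X_pair hp
  have hEp := natCast_mul_eq_X_mul_pderiv_add hij hp' hp1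
  have hEg := natCast_mul_eq_X_mul_pderiv_add hij hg hgt
  have hDp := lderiv_eq_C_mul_pderiv_add hij a hp'
  rw [lderiv_eq_C_eval a hp1] at hDp
  rw [lderiv_eq_C_mul_pderiv_add hij a hg, C_mul, map_natCast, jacobianDet]
  rw [Nat.cast_one, one_mul] at hEp
  linear_combination (t * g) * hDp + (C (a i) * pderiv i p + C (a j) * pderiv j p) * hEg
    - (C (a i) * pderiv i g + C (a j) * pderiv j g) * hEp

theorem span_lderiv_jacobianDet_eq (hij : i ≠ j) (a : Fin m → R)
    (hp : p ∈ Submodule.span R {X i, X j}) (hpa : IsUnit (eval a p)) (hg : g ∈ supported R {i, j}) :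
    Ideal.span {lderiv a g, jacobianDet i j p g} = Ideal.span {pderiv i g, pderiv j g} := by
  have hdet : IsUnit (C (a i) * pderiv i p - C (a j) * -pderiv j p) := by
    rw [mul_neg, sub_neg_eq_add,
      ← lderiv_eq_C_mul_pderiv_add hij a (mem_supported_of_mem_span_X_pair hp),
      lderiv_eq_C_eval a (isHomogeneous_one_of_mem_span_X_pair hp)]
    exact hpa.map C
  rw [← span_pair_eq_of_isUnit_det (pderiv i g) (pderiv j g) hdet,
    ← lderiv_eq_C_mul_pderiv_add hij a hg, neg_mul, neg_add_eq_sub, jacobianDet]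

theorem span_lderiv_mul_eq [IsDomain R] (hij : i ≠ j) (a : Fin m → R)
    (hp : p ∈ Submodule.span R {X i, X j}) (hu : IsUnit (t * eval a p))
    (hph : p * h ∈ supported R {i, j}) (hpht : (p * h).IsHomogeneous t) :
    Ideal.span {C (a j) * X i - C (a i) * X j, lderiv a (p * h)} =
      Ideal.span {C (a j) * X i - C (a i) * X j, h} := by
  have hp0 : p ≠ 0 := by
    rintro rfl
    simp at hu
  have key := C_mul_eq_mul_lderiv_sub_mul_jacobianDet hij a hp hph hpht
  rw [jacobianDet_self_mul] at key
  refine (span_pair_eq_of_unit_mul_eq_add (w := -jacobianDet i j p h) (hu.map C) ?_).symm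
  exact mul_left_cancel₀ hp0 (by linear_combination key)

theorem colon_span_pderiv_pair_eq [IsDomain R] [UniqueFactorizationMonoid R] (hij : i ≠ j)
    (a : Fin m → R) (hp : p ∈ Submodule.span R {X i, X j}) (hu : IsUnit (t * eval a p))
    (hg : g ∈ supported R {i, j}) (hgt : g.IsHomogeneous t)
    (hcoprime : IsRelPrime g (lderiv a g)) :
    (Ideal.span {g, lderiv a g}).colon (Ideal.span {pderiv i g, pderiv j g} : Ideal _) =
      Ideal.span {C (a j) * X i - C (a i) * X j, lderiv a g} := by
  have key := C_mul_eq_mul_lderiv_sub_mul_jacobianDet hij a hp hg hgt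
  have hspan : Ideal.span {g, lderiv a g} =
      Ideal.span {lderiv a g, (C (a j) * X i - C (a i) * X j) * jacobianDet i j p g} := by
    rw [Ideal.span_pair_comm]
    exact span_pair_eq_of_unit_mul_eq_add (w := -p) (hu.map C).neg (by linear_combination -key)
  have hjac : IsRelPrime (lderiv a g) (jacobianDet i j p g) := fun d hD hJ =>
    hcoprime ((hu.map C).dvd_mul_left.1 (key ▸ dvd_sub (hD.mul_left _) (hJ.mul_left _))) hD
  rw [hspan, ← span_lderiv_jacobianDet_eq hij a hp (isUnit_of_mul_isUnit_right hu) hg]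
  exact colon_span_mul_pair_of_isRelPrime _ hjac

end Forms

theorem isRelPrime_prod_lderiv_prod {K ι : Type*} [Field K] [Fintype ι] {m : ℕ} {a : Fin m → K}
    {L : ι → MvPolynomial (Fin m) K} (hhom : ∀ k, (L k).IsHomogeneous 1)
    (hprop : ∀ k l, k ≠ l → ∀ c : K, L k ≠ c • L l) (ha : ∀ k, eval a (L k) ≠ 0) :
    IsRelPrime (∏ k, L k) (lderiv a (∏ k, L k)) := by
  have hne (k : ι) : L k ≠ 0 := fun h => ha k (by rw [h, map_zero])
  rw [lderiv_eq_mkDerivation]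
  refine isRelPrime_prod_derivation_prod _ (fun k _ l _ hkl => ?_) fun k _ => ?_
  · exact isRelPrime_of_isHomogeneous_one (hhom k) (hhom l) (hne l) (hprop k l hkl)
  · rw [← lderiv_eq_mkDerivation, lderiv_eq_C_eval a (hhom k)]
    exact (ha k).isUnit.map C

theorem stmt_4_general {K ι : Type*} [Field K] [Fintype ι] [DecidableEq ι] {m : ℕ} {i j : Fin m}
    (hij : i ≠ j) (hcard : (Fintype.card ι : K) ≠ 0) (L : ι → MvPolynomial (Fin m) K)
    (hspan : ∀ k, L k ∈ Submodule.span K {X i, X j})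
    (hprop : ∀ k l, k ≠ l → ∀ c : K, L k ≠ c • L l)
    (a : Fin m → K) (ha : eval a (∏ k, L k) ≠ 0) :
    ((Ideal.span {∏ k, L k, lderiv a (∏ k, L k)}).colon
        (Ideal.span {pderiv i (∏ k, L k), pderiv j (∏ k, L k)}) =
      Ideal.span {C (a j) * X i - C (a i) * X j, lderiv a (∏ k, L k)}) ∧
    (∀ k : ι,
      (Ideal.span {∏ k, L k, lderiv a (∏ k, L k)}).colon
          (Ideal.span {pderiv i (∏ k, L k), pderiv j (∏ k, L k)}) =
        Ideal.span {C (a j) * X i - C (a i) * X j, ∏ l ∈ Finset.univ.erase k, L l}) ∧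
    Ideal.span {pderiv i (∏ k, L k), pderiv j (∏ k, L k)} =
      Ideal.span (Set.range fun r => pderiv r (∏ k, L k)) := by
  have ha' : ∀ k, eval a (L k) ≠ 0 := by simpa [Finset.prod_ne_zero_iff] using ha
  have hhom (k : ι) := isHomogeneous_one_of_mem_span_X_pair (hspan k)
  have hg : ∏ k, L k ∈ supported K {i, j} :=
    prod_mem fun k _ => mem_supported_of_mem_span_X_pair (hspan k)
  have hgt : (∏ k, L k).IsHomogeneous (Fintype.card ι) := by
    simpa using IsHomogeneous.prod Finset.univ L (fun _ => 1) fun k _ => hhom k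
  have hu (k : ι) : IsUnit (Fintype.card ι * eval a (L k)) := (mul_ne_zero hcard (ha' k)).isUnit
  have hcoprime := isRelPrime_prod_lderiv_prod hhom hprop ha'
  obtain ⟨k₀⟩ : Nonempty ι := Fintype.card_pos_iff.1 <|
    Nat.pos_of_ne_zero fun h => hcard (by rw [h, Nat.cast_zero])
  have hcolon := colon_span_pderiv_pair_eq hij a (hspan k₀) (hu k₀) hg hgt hcoprime
  refine ⟨hcolon, fun k => hcolon.trans ?_, span_pderiv_pair_eq_span_range hg⟩
  rw [← Finset.mul_prod_erase _ L (Finset.mem_univ k)] at hg hgt ⊢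
  exact span_lderiv_mul_eq hij a (hspan k) (hu k) hg hgt

/-- Let `K` have characteristic zero and let `g = Π L i` be a product of
`t ≥ 2` distinct (pairwise non-proportional) linear forms, all lying in the `K`-span of
`x₀` and `x₁` (so `g` vanishes on `P = {x₀ = x₁ = 0}`).  For a general linear form
`ℓ = Σᵢ aᵢxᵢ`, set `ℓ_P := a₁x₀ − a₀x₁`.  Then
`(g, ∂g/∂ℓ) : (∂g/∂x₀, ∂g/∂x₁) = (ℓ_P, ∂g/∂ℓ) = (ℓ_P, g/λ)` for any linear divisor `λ`
of `g`; moreover `(∂g/∂x₀, ∂g/∂x₁)` coincides with the Jacobian ideal `Jac(g)`. -/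
theorem stmt_4 {K : Type*} [Field K] [CharZero K] {n t : ℕ} (ht : 2 ≤ t)
    (L : Fin t → MvPolynomial (Fin (n + 2)) K)
    (hhom : ∀ i, (L i).IsHomogeneous 1) (hne : ∀ i, L i ≠ 0)
    (hspan : ∀ i, L i ∈ Submodule.span K ({X 0, X 1} : Set (MvPolynomial (Fin (n + 2)) K)))
    (hprop : ∀ i j, i ≠ j → ∀ c : K, L i ≠ c • L j) :
    ∃ p : MvPolynomial (Fin (n + 2)) K, p ≠ 0 ∧
      ∀ a : Fin (n + 2) → K, eval a p ≠ 0 →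
        ((Ideal.span {∏ i, L i, lderiv a (∏ i, L i)}).colon
            (Ideal.span {pderiv 0 (∏ i, L i), pderiv 1 (∏ i, L i)}) =
          Ideal.span {C (a 1) * X 0 - C (a 0) * X 1, lderiv a (∏ i, L i)}) ∧
        (∀ j : Fin t,
          (Ideal.span {∏ i, L i, lderiv a (∏ i, L i)}).colon
              (Ideal.span {pderiv 0 (∏ i, L i), pderiv 1 (∏ i, L i)}) =
            Ideal.span {C (a 1) * X 0 - C (a 0) * X 1, ∏ i ∈ Finset.univ.erase j, L i}) ∧
        Ideal.span {pderiv 0 (∏ i, L i), pderiv 1 (∏ i, L i)} =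
          Ideal.span (Set.range fun i => pderiv i (∏ j, L j)) := by
  exact ⟨∏ i, L i, Finset.prod_ne_zero_iff.2 fun i _ => hne i, stmt_4_general zero_ne_one
    (by rw [Fintype.card_fin, Nat.cast_ne_zero]; omega) L hspan hprop⟩
end

section
/- Let K have characteristic zero and let A = A(f_A) be a hyperplane arrangement of d ≥ 2 hyperplanes in ℙⁿ. For a general linear form ℓ, the general residual r_A = (f_A, ∂f_A/∂ℓ) : Jac(f_A) has the minimal primary decomposition r_A = ⋂_{P ∈ S(A)} (ℓ_P, I_P^{t_P − 1}), where for each P ∈ S(A), ℓ_P is a linear form defining the hyperplane spanned by P and the dual point ℓ∨, and (ℓ_P, I_P^{t_P−1}) denotes the ideal (ℓ_P) + I_P^{t_P−1}, a primary ideal with radical I_P. In particular, the radical of r_A equals ⋂_{P ∈ S(A)} I_P, the ideal of S(A). -/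
open MvPolynomial

/-- The Jacobian ideal of `f`, generated by all partial derivatives of `f`. -/
noncomputable def jacobianIdeal {K : Type*} [CommRing K] {m : ℕ}
    (f : MvPolynomial (Fin m) K) : Ideal (MvPolynomial (Fin m) K) :=
  Ideal.span (Set.range fun i => pderiv i f)

open Classical in
/-- `t_P`: the number of hyperplanes of the arrangement containing `P`. -/
noncomputable def tOf {K : Type*} [CommRing K] {m d : ℕ}
    (L : Fin d → MvPolynomial (Fin m) K) (P : Ideal (MvPolynomial (Fin m) K)) : ℕ :=
  (Finset.univ.filter (fun i => L i ∈ P)).card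

/-!
Write `f = ∏ L i` and let `∂` be the derivative along `ℓ`. Since `∂ (L i)` is a nonzero constant,
`f` and `∂ f` have no common factor, so `(f, ∂ f)` is a complete intersection. An associated prime
of it contains some `L i`, hence, reading `∂ f` modulo `L i`, a second `L j`; by unmixedness it
equals `(L i, L j) ∈ S(A)`. Membership in `(f, ∂ f)` can therefore be tested locally at each
`P ∈ S(A)`.

Split `f = F * G` at `P`, with `F` the product of the forms in `P`. The Leibniz rule shows that `G`,
a unit at `P`, can be discarded. Choose linear coordinates `u = ℓ_P`, `v` on `P` with `∂ u = 0`,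
`∂ v = 1`, and let `∂'` be the dual derivative to `u`. Euler's relation
`u * ∂' F + v * ∂ F = t * F`, with `t = t_P` invertible, yields
`(F, ∂ F) : (∂' F, ∂ F) = (u, ∂ F)`. Modulo `u`, the product `F` is a nonzero multiple of `v ^ t`;
as `∂ u = 0`, this ideal is `(u, v ^ (t - 1)) = (ℓ_P) + P ^ (t - 1)`.
-/

section PrimaryComponents

variable {R : Type*} [CommRing R]

theorem span_pair_eq_comap_quotientMk (u v : R) :
    Ideal.span {u, v} = (Ideal.span {Ideal.Quotient.mk (Ideal.span {u}) v}).comap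
      (Ideal.Quotient.mk (Ideal.span {u})) := by
  rw [← Set.image_singleton, ← Ideal.map_span, Ideal.comap_map_quotientMk, ← Ideal.span_insert]

theorem span_singleton_sup_span_pair_pow (u v : R) (k : ℕ) :
    Ideal.span {u} ⊔ Ideal.span {u, v} ^ k = Ideal.span {u, v ^ k} := by
  have hu : Ideal.Quotient.mk (Ideal.span {u}) u = 0 :=
    Ideal.Quotient.eq_zero_iff_mem.2 (Ideal.mem_span_singleton_self u)
  rw [← Ideal.comap_map_quotientMk, Ideal.map_pow, Ideal.map_span, Set.image_pair, hu,
    Ideal.span_insert_zero, Ideal.span_singleton_pow, span_pair_eq_comap_quotientMk, map_pow]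

theorem isPrimary_span_singleton_pow [IsDomain R] {p : R} (hp : Prime p) {k : ℕ} (hk : k ≠ 0) :
    (Ideal.span {p ^ k}).IsPrimary := by
  have hprime : (Ideal.span {p}).IsPrime := (Ideal.span_singleton_prime hp.ne_zero).2 hp
  have hrad : (Ideal.span {p ^ k}).radical = Ideal.span {p} := by
    rw [← Ideal.span_singleton_pow, Ideal.radical_pow _ hk, hprime.radical]
  refine Ideal.isPrimary_iff.2 ⟨fun htop => hprime.ne_top ?_, fun {x y} hxy => ?_⟩
  · rw [← hrad, htop, Ideal.radical_top]
  · rw [hrad, Ideal.mem_span_singleton, Ideal.mem_span_singleton, or_iff_not_imp_right]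
    exact fun hy => hp.pow_dvd_of_dvd_mul_right k hy (Ideal.mem_span_singleton.1 hxy)

theorem isPrimary_span_pair_pow {u v : R} (hu : (Ideal.span {u}).IsPrime)
    (huv : (Ideal.span {u, v}).IsPrime) (hv : ¬ u ∣ v) {k : ℕ} (hk : k ≠ 0) :
    (Ideal.span {u, v ^ k}).IsPrimary := by
  have hv0 : Ideal.Quotient.mk (Ideal.span {u}) v ≠ 0 := by
    rwa [Ne, Ideal.Quotient.eq_zero_iff_mem, Ideal.mem_span_singleton]
  have hprime : Prime (Ideal.Quotient.mk (Ideal.span {u}) v) := by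
    rw [← Ideal.span_singleton_prime hv0, ← Ideal.map_comap_of_surjective _
      Ideal.Quotient.mk_surjective (Ideal.span _), ← span_pair_eq_comap_quotientMk]
    refine Ideal.map_isPrime_of_surjective Ideal.Quotient.mk_surjective ?_
    rw [Ideal.mk_ker]
    exact Ideal.span_mono (by simp)
  rw [span_pair_eq_comap_quotientMk, map_pow]
  exact (isPrimary_span_singleton_pow hprime hk).comap _

theorem radical_sup_pow {I P : Ideal R} (hP : P.IsPrime) (hIP : I ≤ P) {k : ℕ} (hk : k ≠ 0) :
    (I ⊔ P ^ k).radical = P :=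
  le_antisymm (hP.radical_le_iff.2 (sup_le hIP (Ideal.pow_le_self hk)))
    fun _ hx => ⟨k, Ideal.mem_sup_right (Ideal.pow_mem_pow hx k)⟩

theorem radical_biInf_of_finite {ι : Type*} {S : Set ι} (hS : S.Finite) (Q : ι → Ideal R) :
    (⨅ i ∈ S, Q i).radical = ⨅ i ∈ S, (Q i).radical := by
  have hinf := map_finset_inf Ideal.radicalInfTopHom hS.toFinset Q
  simpa [Finset.inf_eq_iInf] using hinf

theorem not_biInf_diff_le_of_radical_eq {S : Set (Ideal R)} (hS : S.Finite)
    (hprime : ∀ P ∈ S, P.IsPrime) (hanti : IsAntichain (· ≤ ·) S) {Q : Ideal R → Ideal R}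
    (hQ : ∀ P ∈ S, (Q P).radical = P) {P : Ideal R} (hP : P ∈ S) :
    ¬ ⨅ P' ∈ S \ {P}, Q P' ≤ Q P := by
  intro hle
  have hfin : (S \ {P}).Finite := hS.sdiff
  have hleP : hfin.toFinset.inf Q ≤ P := by
    rw [Finset.inf_eq_iInf]
    simp only [Set.Finite.mem_toFinset]
    exact hle.trans (Ideal.le_radical.trans (hQ P hP).le)
  obtain ⟨P', hP', hQP⟩ := (hprime P hP).inf_le'.1 hleP
  obtain ⟨hP'S, hne⟩ := hfin.mem_toFinset.1 hP'
  rw [← (hprime P hP).radical_le_iff, hQ P' hP'S] at hQP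
  exact hne (hanti.eq hP'S hP hQP)

end PrimaryComponents

section AssociatedPrimes

variable {R : Type*} [CommRing R] [IsDomain R] [DecompositionMonoid R]

theorem exists_koszul_syzygy {f g α β : R} (hf : f ≠ 0) (hfg : IsRelPrime f g)
    (h : α * f + β * g = 0) : ∃ c, α = c * g ∧ β = -(c * f) := by
  obtain ⟨c, rfl⟩ : f ∣ β := hfg.dvd_of_dvd_mul_right ⟨-α, by linear_combination h⟩
  refine ⟨-c, mul_right_cancel₀ hf ?_, by ring⟩
  linear_combination h

theorem mem_span_pair_of_forall_mul_mem {f g u v w h : R} (hf : f ≠ 0) (hfg : IsRelPrime f g)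
    (hu : Prime u) (huv : ¬ u ∣ v) (hprime : (Ideal.span {u, v}).IsPrime)
    (hw : w ∉ Ideal.span {u, v}) (huh : u * h ∈ Ideal.span {f, g})
    (hvh : v * h ∈ Ideal.span {f, g}) (hwh : w * h ∈ Ideal.span {f, g}) :
    h ∈ Ideal.span {f, g} := by
  obtain ⟨α₁, β₁, h₁⟩ := Ideal.mem_span_pair.1 huh
  obtain ⟨α₂, β₂, h₂⟩ := Ideal.mem_span_pair.1 hvh
  obtain ⟨α₃, β₃, h₃⟩ := Ideal.mem_span_pair.1 hwh
  -- Comparing the relations for `u`, `v`, `w` in pairs gives three Koszul syzygies, with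
  -- coefficients `c₁₂`, `c₁₃`, `c₂₃`; consistency of the three forces `w * c₁₂ ∈ (u, v)`.
  obtain ⟨c₁₂, hα₁₂, hβ₁₂⟩ := exists_koszul_syzygy hf hfg (α := v * α₁ - u * α₂)
    (β := v * β₁ - u * β₂) (by linear_combination v * h₁ - u * h₂)
  obtain ⟨c₁₃, -, hβ₁₃⟩ := exists_koszul_syzygy hf hfg (α := w * α₁ - u * α₃)
    (β := w * β₁ - u * β₃) (by linear_combination w * h₁ - u * h₃)
  obtain ⟨c₂₃, -, hβ₂₃⟩ := exists_koszul_syzygy hf hfg (α := w * α₂ - v * α₃)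
    (β := w * β₂ - v * β₃) (by linear_combination w * h₂ - v * h₃)
  have hwc : w * c₁₂ ∈ Ideal.span {u, v} := by
    refine Ideal.mem_span_pair.2 ⟨-c₂₃, c₁₃, mul_right_cancel₀ hf ?_⟩
    linear_combination v * hβ₁₃ - w * hβ₁₂ - u * hβ₂₃
  obtain ⟨q, p, hc⟩ := Ideal.mem_span_pair.1 ((hprime.mem_or_mem hwc).resolve_left hw)
  obtain ⟨x, hx⟩ : u ∣ α₁ - p * g := (hu.dvd_or_dvd
    ⟨α₂ + q * g, by linear_combination hα₁₂ - g * hc⟩).resolve_left huv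
  obtain ⟨y, hy⟩ : u ∣ β₁ + p * f := (hu.dvd_or_dvd
    ⟨β₂ - q * f, by linear_combination hβ₁₂ + f * hc⟩).resolve_left huv
  refine Ideal.mem_span_pair.2 ⟨x, y, mul_left_cancel₀ hu.ne_zero ?_⟩
  linear_combination h₁ - f * hx - g * hy

theorem eq_span_pair_of_isAssociatedPrime [IsNoetherianRing R] {f g u v : R} (hf : f ≠ 0)
    (hfg : IsRelPrime f g) (hu : Prime u) (huv : ¬ u ∣ v) (hprime : (Ideal.span {u, v}).IsPrime)
    {q : Ideal R} (hq : IsAssociatedPrime q (R ⧸ Ideal.span {f, g})) (huq : u ∈ q) (hvq : v ∈ q) :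
    q = Ideal.span {u, v} := by
  obtain ⟨hqprime, y, hy⟩ := isAssociatedPrime_iff.1 hq
  obtain ⟨h, rfl⟩ := Ideal.Quotient.mk_surjective y
  have hmem (x : R) : x ∈ q ↔ x * h ∈ Ideal.span {f, g} := by
    rw [hy, Submodule.mem_colon_singleton, Submodule.mem_bot, ← Ideal.Quotient.eq_zero_iff_mem]
    rfl
  refine le_antisymm (fun w hwq => ?_) (Ideal.span_le.2 (Set.pair_subset huq hvq))
  by_contra hw
  refine hqprime.ne_top ((Ideal.eq_top_iff_one _).2 ((hmem 1).2 ?_))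
  rw [one_mul]
  exact mem_span_pair_of_forall_mul_mem hf hfg hu huv hprime hw ((hmem u).1 huq)
    ((hmem v).1 hvq) ((hmem w).1 hwq)

end AssociatedPrimes

section AssociatedPrimesOfQuotient

variable {R : Type*} [CommRing R]

theorem mem_of_forall_isAssociatedPrime [IsNoetherianRing R] {I : Ideal R} {h : R}
    (hloc : ∀ q, IsAssociatedPrime q (R ⧸ I) → ∃ s ∉ q, s * h ∈ I) : h ∈ I := by
  by_contra hI
  obtain ⟨q, hq, hle⟩ := exists_le_isAssociatedPrime_of_isNoetherianRing R
    (Ideal.Quotient.mk I h) (by rwa [Ne, Ideal.Quotient.eq_zero_iff_mem])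
  obtain ⟨s, hs, hsh⟩ := hloc q hq
  refine hs (hle (Submodule.mem_colon_singleton.2 ?_))
  exact Ideal.Quotient.eq_zero_iff_mem.2 hsh

theorem le_of_isAssociatedPrime_quotient {I q : Ideal R} (hq : IsAssociatedPrime q (R ⧸ I)) :
    I ≤ q := by
  simpa [Submodule.annihilator_top, Ideal.annihilator_quotient] using hq.annihilator_le

end AssociatedPrimesOfQuotient

section Derivations

variable {R A : Type*} [CommRing R] [CommRing A] [Algebra R A] {ι : Type*}

theorem derivation_sum_apply {s : Finset ι} (D : ι → Derivation R A A) (x : A) :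
    (∑ i ∈ s, D i) x = ∑ i ∈ s, D i x :=
  (congrFun (map_sum Derivation.coeFnAddMonoidHom D s) x).trans (Finset.sum_apply x s _)

theorem derivation_prod_of_forall_eq_mul (D : Derivation R A A) {s : Finset ι} {M c : ι → A}
    (hD : ∀ i ∈ s, D (M i) = c i * M i) : D (∏ i ∈ s, M i) = (∑ i ∈ s, c i) * ∏ i ∈ s, M i := by
  induction s using Finset.cons_induction with
  | empty => simp
  | cons i s hi ih =>
    rw [Finset.forall_mem_cons] at hD
    rw [Finset.prod_cons, Finset.sum_cons, Derivation.leibniz, ih hD.2, hD.1, smul_eq_mul,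
      smul_eq_mul]
    ring

theorem derivation_prod_mem_iff [DecidableEq ι] (D : Derivation R A A) {s : Finset ι}
    {M : ι → A} {i : ι} (hi : i ∈ s) (hD : IsUnit (D (M i))) {q : Ideal A} (hq : M i ∈ q) :
    D (∏ j ∈ s, M j) ∈ q ↔ ∏ j ∈ s.erase i, M j ∈ q := by
  rw [← Finset.mul_prod_erase s M hi, Derivation.leibniz, smul_eq_mul, smul_eq_mul,
    q.add_mem_iff_right (q.mul_mem_right _ hq), q.mul_unit_mem_iff_mem hD]

theorem isRelPrime_prod_derivation [IsDomain A] [DecompositionMonoid A] (D : Derivation R A A)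
    {s : Finset ι} {M : ι → A} (hprime : ∀ i ∈ s, Prime (M i)) (hD : ∀ i ∈ s, IsUnit (D (M i)))
    (hdvd : ∀ i ∈ s, ∀ j ∈ s, i ≠ j → ¬ M i ∣ M j) :
    IsRelPrime (∏ i ∈ s, M i) (D (∏ i ∈ s, M i)) := by
  classical
  refine IsRelPrime.prod_left fun i hi => ?_
  rw [(hprime i hi).irreducible.isRelPrime_iff_not_dvd, ← Ideal.mem_span_singleton,
    derivation_prod_mem_iff D hi (hD i hi) (Ideal.mem_span_singleton_self _),
    Ideal.mem_span_singleton, (hprime i hi).dvd_finsetProd_iff]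
  rintro ⟨j, hj, hij⟩
  rw [Finset.mem_erase] at hj
  exact hdvd i hi j hj.2 hj.1.symm hij

theorem mul_mul_derivation_mem_span_pair {D E : Derivation R A A} {F G g : A}
    (hg : g * D (F * G) ∈ Ideal.span {F * G, E (F * G)}) :
    g * G * D F ∈ Ideal.span {F, E F} := by
  obtain ⟨x, y, hxy⟩ := Ideal.mem_span_pair.1 hg
  simp only [Derivation.leibniz, smul_eq_mul] at hxy
  refine Ideal.mem_span_pair.2 ⟨x * G + y * E G - g * D G, y * G, ?_⟩
  linear_combination hxy

theorem mul_mul_derivation_mul_mem_span_pair {D E : Derivation R A A} {F G g : A}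
    (hg : g * D F ∈ Ideal.span {F, E F}) :
    G * (g * D (F * G)) ∈ Ideal.span {F * G, E (F * G)} := by
  obtain ⟨x, y, hxy⟩ := Ideal.mem_span_pair.1 hg
  simp only [Derivation.leibniz, smul_eq_mul]
  refine Ideal.mem_span_pair.2 ⟨G * x + g * D G - y * E G, G * y, ?_⟩
  linear_combination G ^ 2 * hxy

end Derivations

section EulerRelation

/-! Here `Fa`, `Fb`, `Fe` stand for directional derivatives of `F`, and `(u, v)` for coordinates
in which `F` is homogeneous of degree `t`. -/

variable {A : Type*} [CommRing A] {F Fa Fb Fe u v t g : A}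

theorem mem_span_pair_of_mul_mem_of_euler [DecompositionMonoid A]
    (heuler : u * Fb + v * Fa = t * F) (ht : IsUnit t) (hrel : IsRelPrime F Fa)
    (hg : g * Fb ∈ Ideal.span {F, Fa}) : g ∈ Ideal.span {u, Fa} := by
  have hrel' : IsRelPrime Fa Fb := fun d hda hdb =>
    hrel (ht.dvd_mul_left.1 (heuler ▸ dvd_add (hdb.mul_left u) (hda.mul_left v))) hda
  obtain ⟨x, y, hxy⟩ := Ideal.mem_span_pair.1 hg
  obtain ⟨s, hts⟩ := ht.exists_right_inv
  obtain ⟨r, hr⟩ : Fa ∣ g - x * s * u := hrel'.dvd_of_dvd_mul_right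
    ⟨y + x * s * v, by linear_combination -hxy - x * s * heuler - x * F * hts⟩
  exact Ideal.mem_span_pair.2 ⟨x * s, r, by linear_combination -hr⟩

theorem mul_mem_span_pair_of_euler {p q : A} (heuler : u * Fb + v * Fa = t * F)
    (hFe : Fe = p * Fb + q * Fa) (hg : g ∈ Ideal.span {u, Fa}) :
    g * Fe ∈ Ideal.span {F, Fa} := by
  obtain ⟨α, β, rfl⟩ := Ideal.mem_span_pair.1 hg
  refine Ideal.mem_span_pair.2 ⟨α * p * t, α * u * q - α * p * v + β * Fe, ?_⟩
  linear_combination -α * p * heuler - α * u * hFe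

end EulerRelation

section LinearForms

variable {σ ι K : Type*}

theorem eqOn_linearForms [CommSemiring K] {M : Type*} [AddCommMonoid M] [Module K M]
    {φ ψ : MvPolynomial σ K →ₗ[K] M} (h : ∀ i, φ (X i) = ψ (X i)) {w : MvPolynomial σ K}
    (hw : w.IsHomogeneous 1) : φ w = ψ w := by
  rw [← mem_homogeneousSubmodule, homogeneousSubmodule_one_eq_span_X] at hw
  exact LinearMap.eqOn_span (Set.forall_mem_range.2 h) hw

/-- The points `b j` are dual to the linear forms `u i`: `u i` takes the value `1` at `b i` and
vanishes at the other `b j`. -/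
structure IsDualPoints [CommSemiring K] [DecidableEq ι] (u : ι → MvPolynomial σ K)
    (b : ι → σ → K) : Prop where
  isHomogeneous : ∀ i, (u i).IsHomogeneous 1
  eval_eq : ∀ i j, eval (b j) (u i) = (Pi.single i 1 : ι → K) j

theorem exists_isDualPoints [Field K] [DecidableEq ι] {u : ι → MvPolynomial σ K}
    (hu : ∀ i, (u i).IsHomogeneous 1) (hli : LinearIndependent K u) :
    ∃ b, IsDualPoints u b := by
  obtain ⟨g, hg⟩ := (Finsupp.linearCombination K u).exists_leftInverse_of_injective
    (LinearMap.ker_eq_bot.2 hli)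
  have hgu (i : ι) : g (u i) = Finsupp.single i 1 := by
    simpa using LinearMap.congr_fun hg (Finsupp.single i 1)
  have heval (j : ι) {w : MvPolynomial σ K} (hw : w.IsHomogeneous 1) :
      eval (fun k => g (X k) j) w = g w j :=
    eqOn_linearForms (φ := (aeval fun k => g (X k) j).toLinearMap)
      (ψ := Finsupp.lapply j ∘ₗ g) (by simp) hw
  refine ⟨fun j k => g (X k) j, hu, fun i j => ?_⟩
  rw [heval j (hu i), hgu, Finsupp.single_eq_pi_single]

namespace IsDualPoints

variable [CommRing K] [Fintype ι] {u : ι → MvPolynomial σ K} {b : ι → σ → K}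

/-- The endomorphism of the polynomial ring that projects the linear forms, along the span of
the `u i`, onto the linear forms vanishing at all `b j`. -/
noncomputable def projection (u : ι → MvPolynomial σ K) (b : ι → σ → K) :
    MvPolynomial σ K →ₐ[K] MvPolynomial σ K :=
  aeval fun k => X k - ∑ j, C (b j k) * u j

theorem projection_linearForm (u : ι → MvPolynomial σ K) (b : ι → σ → K) {w : MvPolynomial σ K}
    (hw : w.IsHomogeneous 1) : projection u b w = w - ∑ j, C (eval (b j) w) * u j := by
  refine (eqOn_linearForms (φ := (projection u b).toLinearMap) (ψ := LinearMap.id -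
    ∑ j, ((aeval (b j)).toLinearMap.smulRight (u j))) (fun k => ?_) hw).trans ?_
  · simp [projection, smul_eq_C_mul]
  · simp [smul_eq_C_mul]

theorem sub_projection_mem (u : ι → MvPolynomial σ K) (b : ι → σ → K) (p : MvPolynomial σ K) :
    p - projection u b p ∈ Ideal.span (Set.range u) := by
  have hcomp : (Ideal.Quotient.mkₐ K (Ideal.span (Set.range u))).comp (projection u b) =
      Ideal.Quotient.mkₐ K (Ideal.span (Set.range u)) := by
    refine algHom_ext fun k => ?_
    rw [AlgHom.comp_apply, Ideal.Quotient.mkₐ_eq_mk, eq_comm, Ideal.Quotient.mk_eq_mk_iff_sub_mem,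
      projection, aeval_X, sub_sub_cancel]
    exact Ideal.sum_mem _ fun j _ => Ideal.mul_mem_left _ _ (Ideal.subset_span ⟨j, rfl⟩)
  exact (Ideal.Quotient.mk_eq_mk_iff_sub_mem _ _).1 (DFunLike.congr_fun hcomp p).symm

variable [DecidableEq ι]

theorem ker_projection (h : IsDualPoints u b) :
    RingHom.ker (projection u b) = Ideal.span (Set.range u) := by
  refine le_antisymm (fun p hp => ?_) (Ideal.span_le.2 (Set.range_subset_iff.2 fun i => ?_))
  · simpa [RingHom.mem_ker.1 hp] using sub_projection_mem u b p
  · rw [SetLike.mem_coe, RingHom.mem_ker, projection_linearForm u b (h.isHomogeneous i)]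
    simp [h.eval_eq, Pi.single_apply]

theorem eq_sum (h : IsDualPoints u b) {w : MvPolynomial σ K} (hw : w.IsHomogeneous 1)
    (hmem : w ∈ Ideal.span (Set.range u)) : w = ∑ j, C (eval (b j) w) * u j := by
  rwa [← h.ker_projection, RingHom.mem_ker, projection_linearForm u b hw, sub_eq_zero] at hmem

theorem exists_prod_eq {κ : Type*} {u v : MvPolynomial σ K} {b a : σ → K} {s : Finset κ}
    {M : κ → MvPolynomial σ K} (h : IsDualPoints ![u, v] ![b, a])
    (hM : ∀ i ∈ s, (M i).IsHomogeneous 1) (hmem : ∀ i ∈ s, M i ∈ Ideal.span {u, v}) :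
    ∃ w, ∏ i ∈ s, M i = C (∏ i ∈ s, eval a (M i)) * v ^ s.card + u * w := by
  have hmk (i : κ) (hi : i ∈ s) : Ideal.Quotient.mk (Ideal.span {u}) (M i) =
      Ideal.Quotient.mk (Ideal.span {u}) (C (eval a (M i)) * v) := by
    rw [Ideal.Quotient.mk_eq_mk_iff_sub_mem, Ideal.mem_span_singleton]
    have heq := h.eq_sum (hM i hi) (by rw [Matrix.range_cons_cons_empty]; exact hmem i hi)
    simp only [Fin.sum_univ_two, Matrix.cons_val_zero, Matrix.cons_val_one] at heq
    exact ⟨C (eval b (M i)), by linear_combination heq⟩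
  have hprod : Ideal.Quotient.mk (Ideal.span {u}) (∏ i ∈ s, M i) =
      Ideal.Quotient.mk (Ideal.span {u}) (C (∏ i ∈ s, eval a (M i)) * v ^ s.card) := by
    rw [map_prod, Finset.prod_congr rfl hmk, ← map_prod, Finset.prod_mul_distrib,
      Finset.prod_const, map_prod]
  rw [Ideal.Quotient.mk_eq_mk_iff_sub_mem, Ideal.mem_span_singleton] at hprod
  exact hprod.imp fun w hw => by linear_combination hw

end IsDualPoints

theorem IsDualPoints.isPrime_span [CommRing K] [IsDomain K] [Finite ι] [DecidableEq ι]
    {u : ι → MvPolynomial σ K} {b : ι → σ → K} (h : IsDualPoints u b) :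
    (Ideal.span (Set.range u)).IsPrime :=
  have := Fintype.ofFinite ι
  h.ker_projection ▸ RingHom.ker_isPrime _

variable [Field K]

theorem span_range_eq_of_forall_mem [Finite ι] {u w : ι → MvPolynomial σ K}
    (hu : ∀ i, (u i).IsHomogeneous 1) (hw : ∀ i, (w i).IsHomogeneous 1)
    (hwli : LinearIndependent K w) (huli : LinearIndependent K u)
    (hmem : ∀ i, w i ∈ Ideal.span (Set.range u)) :
    Ideal.span (Set.range w) = Ideal.span (Set.range u) := by
  classical
  have := Fintype.ofFinite ι
  obtain ⟨b, hb⟩ := exists_isDualPoints hu huli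
  have hle : Submodule.span K (Set.range w) ≤ Submodule.span K (Set.range u) := by
    refine Submodule.span_le.2 (Set.range_subset_iff.2 fun i => ?_)
    rw [SetLike.mem_coe, hb.eq_sum (hw i) (hmem i)]
    refine Submodule.sum_mem _ fun j _ => ?_
    rw [← smul_eq_C_mul]
    exact Submodule.smul_mem _ _ (Submodule.subset_span ⟨j, rfl⟩)
  have := FiniteDimensional.span_of_finite K (Set.finite_range u)
  have heq := Submodule.eq_of_le_of_finrank_eq hle
    ((finrank_span_eq_card hwli).trans (finrank_span_eq_card huli).symm)
  rw [Ideal.span, Ideal.span, ← Submodule.span_span_of_tower K, heq,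
    Submodule.span_span_of_tower]

theorem prime_of_isHomogeneous_one {u : MvPolynomial σ K} (hu : u.IsHomogeneous 1) (hu0 : u ≠ 0) :
    Prime u := by
  obtain ⟨b, hb⟩ := exists_isDualPoints (u := fun _ : Unit => u) (fun _ => hu)
    (LinearIndependent.of_subsingleton () hu0)
  rw [← Ideal.span_singleton_prime hu0]
  simpa using hb.isPrime_span

end LinearForms

section LinearFormPairs

variable {σ K : Type*} [Field K] {u v : MvPolynomial σ K}

theorem isPrime_span_pair (hu : u.IsHomogeneous 1) (hv : v.IsHomogeneous 1)
    (hli : LinearIndependent K ![u, v]) : (Ideal.span {u, v}).IsPrime := by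
  obtain ⟨b, hb⟩ := exists_isDualPoints (u := ![u, v]) (Fin.forall_fin_two.2 ⟨hu, hv⟩) hli
  rw [← Matrix.range_cons_cons_empty u v ![]]
  exact hb.isPrime_span

theorem not_dvd_of_linearIndependent_pair (hu : u.IsHomogeneous 1) (hv : v.IsHomogeneous 1)
    (hli : LinearIndependent K ![u, v]) : ¬ u ∣ v := by
  obtain ⟨b, hb⟩ := exists_isDualPoints (u := ![u, v]) (Fin.forall_fin_two.2 ⟨hu, hv⟩) hli
  rintro ⟨w, rfl⟩
  have hzero : eval (b 1) u = 0 := by simpa using hb.eval_eq 0 1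
  simpa [hzero] using hb.eval_eq 1 1

theorem span_pair_eq_of_mem {w z : MvPolynomial σ K} (hu : u.IsHomogeneous 1)
    (hv : v.IsHomogeneous 1) (hw : w.IsHomogeneous 1) (hz : z.IsHomogeneous 1)
    (hwz : LinearIndependent K ![w, z]) (huv : LinearIndependent K ![u, v])
    (hwmem : w ∈ Ideal.span {u, v}) (hzmem : z ∈ Ideal.span {u, v}) :
    Ideal.span {w, z} = Ideal.span {u, v} := by
  rw [← Matrix.range_cons_cons_empty u v ![]] at *
  rw [← Matrix.range_cons_cons_empty w z ![]]
  exact span_range_eq_of_forall_mem (Fin.forall_fin_two.2 ⟨hu, hv⟩)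
    (Fin.forall_fin_two.2 ⟨hw, hz⟩) hwz huv (Fin.forall_fin_two.2 ⟨hwmem, hzmem⟩)

theorem linearIndependent_pair_of_eval {a : σ → K} (hu0 : u ≠ 0) (hua : eval a u = 0)
    (hva : eval a v ≠ 0) : LinearIndependent K ![u, v] :=
  (LinearIndependent.pair_iff' hu0).2 fun c hc => hva (by simp [← hc, hua])

theorem exists_isDualPoints_pair {a : σ → K}
    (hu : u.IsHomogeneous 1) (hv : v.IsHomogeneous 1) (hu0 : u ≠ 0) (hua : eval a u = 0)
    (hva : eval a v = 1) : ∃ b, IsDualPoints ![u, v] ![b, a] := by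
  obtain ⟨b, hb⟩ := exists_isDualPoints (u := ![u, v]) (Fin.forall_fin_two.2 ⟨hu, hv⟩)
    (linearIndependent_pair_of_eval hu0 hua (hva ▸ one_ne_zero))
  refine ⟨b 0, hb.isHomogeneous, ?_⟩
  have hbu : eval (b 0) u = 1 := by simpa using hb.eval_eq 0 0
  have hbv : eval (b 0) v = 0 := by simpa using hb.eval_eq 1 0
  simp [Fin.forall_fin_two, hua, hva, hbu, hbv]

end LinearFormPairs

section DirectionalDerivatives

variable {σ ι κ K : Type*} [Fintype σ]

/-- The derivative in the direction of the point `a`, as a derivation of the polynomial ring. -/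
noncomputable def dirDeriv [CommRing K] (a : σ → K) :
    Derivation K (MvPolynomial σ K) (MvPolynomial σ K) :=
  ∑ i, a i • pderiv i

theorem lderiv_eq_dirDeriv [CommRing K] {m : ℕ} (a : Fin m → K) (f : MvPolynomial (Fin m) K) :
    lderiv a f = dirDeriv a f := by
  simp [lderiv, dirDeriv, derivation_sum_apply]

theorem pderiv_eq_dirDeriv [CommRing K] [DecidableEq σ] (i : σ) :
    pderiv i = dirDeriv (Pi.single i (1 : K)) := by
  simp [dirDeriv, Pi.single_apply]

theorem dirDeriv_linearForm [CommRing K] (a : σ → K) {w : MvPolynomial σ K}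
    (hw : w.IsHomogeneous 1) : dirDeriv a w = C (eval a w) :=
  eqOn_linearForms (φ := (dirDeriv a : MvPolynomial σ K →ₗ[K] MvPolynomial σ K))
    (ψ := Algebra.linearMap K _ ∘ₗ (aeval a).toLinearMap)
    (fun i => by
      classical simp [dirDeriv, derivation_sum_apply, pderiv_X, Pi.single_apply, smul_eq_C_mul]) hw

theorem isUnit_dirDeriv_linearForm [Field K] {a : σ → K} {w : MvPolynomial σ K}
    (hw : w.IsHomogeneous 1) (ha : eval a w ≠ 0) : IsUnit (dirDeriv a w) :=
  dirDeriv_linearForm a hw ▸ ha.isUnit.map C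

namespace IsDualPoints

section Family

variable [CommRing K] [Fintype ι] [DecidableEq ι] {u : ι → MvPolynomial σ K} {b : ι → σ → K}
  {s : Finset κ} {M : κ → MvPolynomial σ K}

theorem sum_mul_dirDeriv_prod (h : IsDualPoints u b) (hM : ∀ i ∈ s, (M i).IsHomogeneous 1)
    (hmem : ∀ i ∈ s, M i ∈ Ideal.span (Set.range u)) :
    ∑ j, u j * dirDeriv (b j) (∏ i ∈ s, M i) = s.card * ∏ i ∈ s, M i := by
  have heuler := derivation_prod_of_forall_eq_mul (∑ j, u j • dirDeriv (b j)) (s := s) (M := M)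
    (c := 1) fun i hi => ?_
  · simpa [derivation_sum_apply] using heuler
  · conv_rhs => rw [h.eq_sum (hM i hi) (hmem i hi)]
    simp [derivation_sum_apply, dirDeriv_linearForm _ (hM i hi), mul_comm]

theorem dirDeriv_prod (h : IsDualPoints u b) (hM : ∀ i ∈ s, (M i).IsHomogeneous 1)
    (hmem : ∀ i ∈ s, M i ∈ Ideal.span (Set.range u)) (e : σ → K) :
    dirDeriv e (∏ i ∈ s, M i) = ∑ j, C (eval e (u j)) * dirDeriv (b j) (∏ i ∈ s, M i) := by
  have hkill := derivation_prod_of_forall_eq_mul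
    (dirDeriv e - ∑ j, eval e (u j) • dirDeriv (b j)) (s := s) (M := M) (c := 0)
    fun i hi => ?_
  · simpa [derivation_sum_apply, sub_eq_zero, smul_eq_C_mul] using hkill
  · have heval := congrArg (eval e) (h.eq_sum (hM i hi) (hmem i hi))
    simp [derivation_sum_apply, dirDeriv_linearForm _ (hM i hi), heval, mul_comm, smul_eq_C_mul]

end Family

section Pair

variable [Field K] {u v : MvPolynomial σ K} {b a : σ → K} {s : Finset κ} {M : κ → MvPolynomial σ K}

theorem span_pair_dirDeriv_prod (h : IsDualPoints ![u, v] ![b, a])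
    (hM : ∀ i ∈ s, (M i).IsHomogeneous 1) (hmem : ∀ i ∈ s, M i ∈ Ideal.span {u, v})
    (ha : ∀ i ∈ s, eval a (M i) ≠ 0) (hs : (s.card : K) ≠ 0) :
    Ideal.span {u, dirDeriv a (∏ i ∈ s, M i)} = Ideal.span {u, v ^ (s.card - 1)} := by
  obtain ⟨w, hw⟩ := h.exists_prod_eq hM hmem
  have hu : dirDeriv a u = 0 := by
    rw [dirDeriv_linearForm a (w := u) (h.isHomogeneous 0)]
    simpa using h.eval_eq 0 1
  have hv : dirDeriv a v = 1 := by
    rw [dirDeriv_linearForm a (w := v) (h.isHomogeneous 1)]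
    simpa using congrArg C (h.eval_eq 1 1)
  have hunit : IsUnit (C (σ := σ) ((∏ i ∈ s, eval a (M i)) * s.card)) :=
    (mul_ne_zero (Finset.prod_ne_zero_iff.2 ha) hs).isUnit.map C
  have hderiv : dirDeriv a (∏ i ∈ s, M i) =
      v ^ (s.card - 1) * C ((∏ i ∈ s, eval a (M i)) * s.card) + dirDeriv a w * u := by
    rw [hw, map_add, Derivation.leibniz, Derivation.leibniz, Derivation.leibniz_pow, hu, hv,
      derivation_C]
    simp only [smul_eq_mul, nsmul_eq_mul, map_mul, map_natCast]
    ring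
  rw [hderiv, Ideal.span_pair_add_mul_left, Ideal.span_insert, Ideal.span_insert,
    Ideal.span_singleton_mul_right_unit hunit]

end Pair

end IsDualPoints

end DirectionalDerivatives

section Arrangements

variable {K : Type*} [Field K] {m d : ℕ} {L : Fin d → MvPolynomial (Fin m) K} {a : Fin m → K}
  {P : Ideal (MvPolynomial (Fin m) K)} {u : MvPolynomial (Fin m) K}

/-- The linear forms `L i` define pairwise distinct hyperplanes. -/
structure IsArrangement_s5 (L : Fin d → MvPolynomial (Fin m) K) : Prop where
  isHomogeneous : ∀ i, (L i).IsHomogeneous 1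
  ne_zero : ∀ i, L i ≠ 0
  not_proportional : ∀ i j, i ≠ j → ∀ c : K, L i ≠ c • L j

open Classical in
/-- The indices of the hyperplanes containing the subspace with ideal `P`. -/
noncomputable def through (L : Fin d → MvPolynomial (Fin m) K)
    (P : Ideal (MvPolynomial (Fin m) K)) : Finset (Fin d) :=
  Finset.univ.filter fun i => L i ∈ P

/-- The product of those `L i` whose hyperplanes contain the subspace with ideal `P`. -/
noncomputable def prodIn (L : Fin d → MvPolynomial (Fin m) K)
    (P : Ideal (MvPolynomial (Fin m) K)) : MvPolynomial (Fin m) K :=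
  ∏ i ∈ through L P, L i

/-- The product of those `L i` whose hyperplanes do not contain the subspace with ideal `P`. -/
noncomputable def prodOut (L : Fin d → MvPolynomial (Fin m) K)
    (P : Ideal (MvPolynomial (Fin m) K)) : MvPolynomial (Fin m) K :=
  ∏ i ∈ (through L P)ᶜ, L i

/-- `u` is an equation of the hyperplane spanned by the point `a` and the subspace with
ideal `P`. -/
def IsJoinEquation (a : Fin m → K) (P : Ideal (MvPolynomial (Fin m) K))
    (u : MvPolynomial (Fin m) K) : Prop :=
  u ≠ 0 ∧ u.IsHomogeneous 1 ∧ u ∈ P ∧ eval a u = 0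

theorem mem_through {i : Fin d} : i ∈ through L P ↔ L i ∈ P := by
  simp [through]

theorem mem_span_range_of_mem_through {v : MvPolynomial (Fin m) K}
    (hPuv : P = Ideal.span {u, v}) {i : Fin d} (hi : i ∈ through L P) :
    L i ∈ Ideal.span (Set.range ![u, v]) := by
  rw [Matrix.range_cons_cons_empty, ← hPuv]
  exact mem_through.1 hi

theorem tOf_eq_card_through (L : Fin d → MvPolynomial (Fin m) K)
    (P : Ideal (MvPolynomial (Fin m) K)) : tOf L P = (through L P).card :=
  rfl

theorem prodIn_mul_prodOut (L : Fin d → MvPolynomial (Fin m) K)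
    (P : Ideal (MvPolynomial (Fin m) K)) : prodIn L P * prodOut L P = ∏ i, L i :=
  Finset.prod_mul_prod_compl _ _

theorem prodOut_notMem (hP : P.IsPrime) : prodOut L P ∉ P := by
  simp [prodOut, hP.prod_mem_iff, mem_through]

theorem finite_singSupp (L : Fin d → MvPolynomial (Fin m) K) : (singSupp L).Finite := by
  refine (Set.finite_range fun p : Fin d × Fin d => Ideal.span {L p.1, L p.2}).subset ?_
  rintro _ ⟨i, j, -, rfl⟩
  exact ⟨(i, j), rfl⟩

theorem two_le_tOf (hP : P ∈ singSupp L) : 2 ≤ tOf L P := by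
  obtain ⟨i, j, hij, rfl⟩ := hP
  rw [← Finset.card_pair hij, tOf_eq_card_through]
  refine Finset.card_le_card fun k hk => mem_through.2 ?_
  obtain rfl | rfl := by simpa using hk
  all_goals exact Ideal.subset_span (by simp)

theorem mem_colon_jacobianIdeal_iff {I : Ideal (MvPolynomial (Fin m) K)}
    {f g : MvPolynomial (Fin m) K} :
    g ∈ I.colon (jacobianIdeal f) ↔ ∀ e : Fin m → K, g * dirDeriv e f ∈ I := by
  rw [jacobianIdeal, Ideal.colon_span, Submodule.mem_colon, Set.forall_mem_range]
  refine ⟨fun h e => ?_, fun h i => ?_⟩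
  · rw [← lderiv_eq_dirDeriv, lderiv, Finset.mul_sum]
    refine Ideal.sum_mem _ fun i _ => ?_
    rw [mul_smul_comm]
    exact Submodule.smul_of_tower_mem _ _ (h i)
  · rw [smul_eq_mul, pderiv_eq_dirDeriv]
    exact h _

namespace IsArrangement_s5

theorem linearIndependent (hL : IsArrangement_s5 L) {i j : Fin d} (hij : i ≠ j) :
    LinearIndependent K ![L i, L j] :=
  (LinearIndependent.pair_iff' (hL.ne_zero i)).2 fun c hc =>
    hL.not_proportional j i hij.symm c hc.symm

theorem prime (hL : IsArrangement_s5 L) (i : Fin d) : Prime (L i) :=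
  prime_of_isHomogeneous_one (hL.isHomogeneous i) (hL.ne_zero i)

theorem isPrime_of_mem_singSupp (hL : IsArrangement_s5 L) (hP : P ∈ singSupp L) : P.IsPrime := by
  obtain ⟨i, j, hij, rfl⟩ := hP
  exact isPrime_span_pair (hL.isHomogeneous i) (hL.isHomogeneous j) (hL.linearIndependent hij)

theorem isAntichain_singSupp (hL : IsArrangement_s5 L) : IsAntichain (· ≤ ·) (singSupp L) := by
  rintro _ ⟨i, j, hij, rfl⟩ _ ⟨k, l, hkl, rfl⟩ hne hle
  exact hne (span_pair_eq_of_mem (hL.isHomogeneous k) (hL.isHomogeneous l) (hL.isHomogeneous i)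
    (hL.isHomogeneous j) (hL.linearIndependent hij) (hL.linearIndependent hkl)
    (hle (Ideal.subset_span (by simp))) (hle (Ideal.subset_span (by simp))))

theorem isRelPrime_prod_dirDeriv (hL : IsArrangement_s5 L) (ha : ∀ i, eval a (L i) ≠ 0)
    (s : Finset (Fin d)) : IsRelPrime (∏ i ∈ s, L i) (dirDeriv a (∏ i ∈ s, L i)) :=
  isRelPrime_prod_derivation _ (fun i _ => hL.prime i)
    (fun i _ => isUnit_dirDeriv_linearForm (hL.isHomogeneous i) (ha i))
    fun i _ j _ hij => not_dvd_of_linearIndependent_pair (hL.isHomogeneous i)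
      (hL.isHomogeneous j) (hL.linearIndependent hij)

theorem mem_singSupp_of_isAssociatedPrime (hL : IsArrangement_s5 L) (ha : ∀ i, eval a (L i) ≠ 0)
    {q : Ideal (MvPolynomial (Fin m) K)}
    (hq : IsAssociatedPrime q (_ ⧸ Ideal.span {∏ i, L i, dirDeriv a (∏ i, L i)})) :
    q ∈ singSupp L := by
  have hle := le_of_isAssociatedPrime_quotient hq
  have hprod : ∏ i, L i ∈ q := hle (Ideal.subset_span (by simp))
  obtain ⟨i, hi, hiq⟩ := hq.isPrime.prod_mem_iff.1 hprod
  have hderiv : dirDeriv a (∏ i, L i) ∈ q := hle (Ideal.subset_span (by simp))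
  rw [derivation_prod_mem_iff _ hi (isUnit_dirDeriv_linearForm (hL.isHomogeneous i) (ha i)) hiq,
    hq.isPrime.prod_mem_iff] at hderiv
  obtain ⟨j, hj, hjq⟩ := hderiv
  have hij : i ≠ j := (Finset.ne_of_mem_erase hj).symm
  exact ⟨i, j, hij, eq_span_pair_of_isAssociatedPrime
    (Finset.prod_ne_zero_iff.2 fun k _ => hL.ne_zero k) (hL.isRelPrime_prod_dirDeriv ha _)
    (hL.prime i) (not_dvd_of_linearIndependent_pair (hL.isHomogeneous i) (hL.isHomogeneous j)
      (hL.linearIndependent hij)) (hL.isPrime_of_mem_singSupp ⟨i, j, hij, rfl⟩) hq hiq hjq⟩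

theorem exists_isDualPoints (hL : IsArrangement_s5 L) (ha : ∀ i, eval a (L i) ≠ 0)
    (hP : P ∈ singSupp L) (hu : IsJoinEquation a P u) :
    ∃ v b, IsDualPoints ![u, v] ![b, a] ∧ P = Ideal.span {u, v} := by
  obtain ⟨i, j, hij, rfl⟩ := hP
  obtain ⟨hu0, huhom, humem, hua⟩ := hu
  set v := (eval a (L i))⁻¹ • L i with hv
  have hvhom : v.IsHomogeneous 1 :=
    (homogeneousSubmodule (Fin m) K 1).smul_mem _ (hL.isHomogeneous i)
  have hva : eval a v = 1 := by simp [hv, smul_eval, ha i]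
  have hvmem : v ∈ Ideal.span {L i, L j} :=
    Submodule.smul_of_tower_mem _ _ (Ideal.subset_span (by simp))
  obtain ⟨b, hb⟩ := exists_isDualPoints_pair huhom hvhom hu0 hua hva
  exact ⟨v, b, hb, (span_pair_eq_of_mem (hL.isHomogeneous i) (hL.isHomogeneous j) huhom hvhom
    (linearIndependent_pair_of_eval hu0 hua (hva ▸ one_ne_zero)) (hL.linearIndependent hij)
    humem hvmem).symm⟩

theorem isPrimary_span_sup_pow (hL : IsArrangement_s5 L) (ha : ∀ i, eval a (L i) ≠ 0)
    (hP : P ∈ singSupp L) (hu : IsJoinEquation a P u) :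
    (Ideal.span {u} ⊔ P ^ (tOf L P - 1)).IsPrimary := by
  have hprime := hL.isPrime_of_mem_singSupp hP
  have ht : tOf L P - 1 ≠ 0 := by have := two_le_tOf hP; lia
  obtain ⟨v, b, hb, hPuv⟩ := hL.exists_isDualPoints ha hP hu
  obtain ⟨hu0, huhom, -, hua⟩ := hu
  have hva : eval a v = 1 := by simpa using hb.eval_eq 1 1
  have huv : ¬ u ∣ v := not_dvd_of_linearIndependent_pair huhom (hb.isHomogeneous 1)
    (linearIndependent_pair_of_eval hu0 hua (hva ▸ one_ne_zero))
  generalize tOf L P - 1 = k at ht ⊢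
  subst hPuv
  rw [span_singleton_sup_span_pair_pow]
  exact isPrimary_span_pair_pow ((Ideal.span_singleton_prime hu0).2
    (prime_of_isHomogeneous_one huhom hu0)) hprime huv ht

theorem radical_span_sup_pow (hL : IsArrangement_s5 L) (hP : P ∈ singSupp L)
    (hu : IsJoinEquation a P u) : (Ideal.span {u} ⊔ P ^ (tOf L P - 1)).radical = P :=
  radical_sup_pow (hL.isPrime_of_mem_singSupp hP)
    ((Ideal.span_singleton_le_iff_mem P).2 hu.2.2.1) (by have := two_le_tOf hP; lia)

section Coordinates

variable {v : MvPolynomial (Fin m) K} {b : Fin m → K}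

theorem euler_prodIn (hL : IsArrangement_s5 L) (hb : IsDualPoints ![u, v] ![b, a])
    (hPuv : P = Ideal.span {u, v}) :
    u * dirDeriv b (prodIn L P) + v * dirDeriv a (prodIn L P) =
      C (tOf L P : K) * prodIn L P := by
  simpa [Fin.sum_univ_two, prodIn, tOf_eq_card_through] using
    hb.sum_mul_dirDeriv_prod (fun i _ => hL.isHomogeneous i)
      (fun _ => mem_span_range_of_mem_through hPuv)

theorem dirDeriv_prodIn (hL : IsArrangement_s5 L) (hb : IsDualPoints ![u, v] ![b, a])
    (hPuv : P = Ideal.span {u, v}) (e : Fin m → K) :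
    dirDeriv e (prodIn L P) = C (eval e u) * dirDeriv b (prodIn L P) +
      C (eval e v) * dirDeriv a (prodIn L P) := by
  simpa [Fin.sum_univ_two, prodIn] using hb.dirDeriv_prod (fun i _ => hL.isHomogeneous i)
    (fun _ => mem_span_range_of_mem_through hPuv) e

theorem span_sup_pow_eq_span_pair_dirDeriv (hL : IsArrangement_s5 L) (ha : ∀ i, eval a (L i) ≠ 0)
    (ht : (tOf L P : K) ≠ 0) (hb : IsDualPoints ![u, v] ![b, a]) (hPuv : P = Ideal.span {u, v}) :
    Ideal.span {u} ⊔ P ^ (tOf L P - 1) = Ideal.span {u, dirDeriv a (prodIn L P)} := by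
  have hspan := hb.span_pair_dirDeriv_prod (fun i _ => hL.isHomogeneous i)
    (fun i hi => hPuv ▸ mem_through.1 hi) (fun i _ => ha i) ht
  rw [prodIn, hspan, ← span_singleton_sup_span_pair_pow, ← hPuv, tOf_eq_card_through]

end Coordinates

theorem mem_span_sup_pow_of_forall_mul_dirDeriv_mem (hL : IsArrangement_s5 L)
    (ha : ∀ i, eval a (L i) ≠ 0) (hP : P ∈ singSupp L) (ht : (tOf L P : K) ≠ 0)
    (hu : IsJoinEquation a P u) {g : MvPolynomial (Fin m) K}
    (hg : ∀ e, g * dirDeriv e (∏ i, L i) ∈ Ideal.span {∏ i, L i, dirDeriv a (∏ i, L i)}) :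
    g ∈ Ideal.span {u} ⊔ P ^ (tOf L P - 1) := by
  have hprimary := hL.isPrimary_span_sup_pow ha hP hu
  obtain ⟨v, b, hb, hPuv⟩ := hL.exists_isDualPoints ha hP hu
  have hgG : g * prodOut L P ∈ Ideal.span {u} ⊔ P ^ (tOf L P - 1) := by
    rw [hL.span_sup_pow_eq_span_pair_dirDeriv ha ht hb hPuv]
    refine mem_span_pair_of_mul_mem_of_euler (hL.euler_prodIn hb hPuv) (ht.isUnit.map C)
      (hL.isRelPrime_prod_dirDeriv ha _) (mul_mul_derivation_mem_span_pair ?_)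
    rw [prodIn_mul_prodOut]
    exact hg b
  refine ((Ideal.isPrimary_iff.1 hprimary).2 hgG).resolve_right ?_
  rw [hL.radical_span_sup_pow hP hu]
  exact prodOut_notMem (hL.isPrime_of_mem_singSupp hP)

theorem prodOut_mul_mem_of_mem_span_sup_pow (hL : IsArrangement_s5 L) (ha : ∀ i, eval a (L i) ≠ 0)
    (hP : P ∈ singSupp L) (ht : (tOf L P : K) ≠ 0) (hu : IsJoinEquation a P u)
    {g : MvPolynomial (Fin m) K} (hg : g ∈ Ideal.span {u} ⊔ P ^ (tOf L P - 1)) (e : Fin m → K) :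
    prodOut L P * (g * dirDeriv e (∏ i, L i)) ∈
      Ideal.span {∏ i, L i, dirDeriv a (∏ i, L i)} := by
  obtain ⟨v, b, hb, hPuv⟩ := hL.exists_isDualPoints ha hP hu
  rw [hL.span_sup_pow_eq_span_pair_dirDeriv ha ht hb hPuv] at hg
  rw [← prodIn_mul_prodOut L P]
  exact mul_mul_derivation_mul_mem_span_pair (mul_mem_span_pair_of_euler
    (hL.euler_prodIn hb hPuv) (hL.dirDeriv_prodIn hb hPuv e) hg)

theorem colon_jacobianIdeal_eq (hL : IsArrangement_s5 L) (ha : ∀ i, eval a (L i) ≠ 0)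
    (ht : ∀ P ∈ singSupp L, (tOf L P : K) ≠ 0)
    {lp : Ideal (MvPolynomial (Fin m) K) → MvPolynomial (Fin m) K}
    (hlp : ∀ P ∈ singSupp L, IsJoinEquation a P (lp P)) :
    (Ideal.span {∏ i, L i, dirDeriv a (∏ i, L i)}).colon (jacobianIdeal (∏ i, L i)) =
      ⨅ P ∈ singSupp L, (Ideal.span {lp P} ⊔ P ^ (tOf L P - 1)) := by
  ext g
  simp only [mem_colon_jacobianIdeal_iff, Submodule.mem_iInf]
  refine ⟨fun hg P hP =>
    hL.mem_span_sup_pow_of_forall_mul_dirDeriv_mem ha hP (ht P hP) (hlp P hP) hg,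
    fun hg e => mem_of_forall_isAssociatedPrime fun q hq => ?_⟩
  have hqS := hL.mem_singSupp_of_isAssociatedPrime ha hq
  exact ⟨prodOut L q, prodOut_notMem hq.isPrime,
    hL.prodOut_mul_mem_of_mem_span_sup_pow ha hqS (ht q hqS) (hlp q hqS) (hg q hqS) e⟩

end IsArrangement_s5

end Arrangements

theorem stmt_5_general {K : Type*} [Field K] {m d : ℕ} {L : Fin d → MvPolynomial (Fin m) K}
    (hL : IsArrangement_s5 L) (ht : ∀ P ∈ singSupp L, (tOf L P : K) ≠ 0) {a : Fin m → K}
    (ha : ∀ i, eval a (L i) ≠ 0)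
    {lp : Ideal (MvPolynomial (Fin m) K) → MvPolynomial (Fin m) K}
    (hlp : ∀ P ∈ singSupp L, IsJoinEquation a P (lp P)) :
    ((Ideal.span {∏ i, L i, lderiv a (∏ i, L i)}).colon (jacobianIdeal (∏ i, L i)) =
      ⨅ P ∈ singSupp L, (Ideal.span {lp P} ⊔ P ^ (tOf L P - 1))) ∧
    (∀ P ∈ singSupp L,
      (Ideal.span {lp P} ⊔ P ^ (tOf L P - 1)).IsPrimary ∧
      (Ideal.span {lp P} ⊔ P ^ (tOf L P - 1)).radical = P) ∧
    (∀ P ∈ singSupp L,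
      ¬ (⨅ P' ∈ singSupp L \ {P}, (Ideal.span {lp P'} ⊔ P' ^ (tOf L P' - 1))) ≤
        (Ideal.span {lp P} ⊔ P ^ (tOf L P - 1))) ∧
    ((Ideal.span {∏ i, L i, lderiv a (∏ i, L i)}).colon
      (jacobianIdeal (∏ i, L i))).radical = ⨅ P ∈ singSupp L, P := by
  have hcolon := lderiv_eq_dirDeriv a (∏ i, L i) ▸ hL.colon_jacobianIdeal_eq ha ht hlp
  have hrad (P) (hP : P ∈ singSupp L) := hL.radical_span_sup_pow hP (hlp P hP)
  refine ⟨hcolon, fun P hP => ⟨hL.isPrimary_span_sup_pow ha hP (hlp P hP), hrad P hP⟩,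
    fun P hP => not_biInf_diff_le_of_radical_eq (finite_singSupp L)
      (fun _ => hL.isPrime_of_mem_singSupp) hL.isAntichain_singSupp hrad hP, ?_⟩
  rw [hcolon, radical_biInf_of_finite (finite_singSupp L)]
  exact biInf_congr hrad

/-- Let `K` have characteristic zero and let `A` be a hyperplane
arrangement of `d ≥ 2` hyperplanes in `ℙⁿ`, given by pairwise non-proportional linear
forms `L i` with `f_A = Π L i`.  For a general linear form `ℓ`, the general residual
`r_A = (f_A, ∂f_A/∂ℓ) : Jac(f_A)` has minimal primary decomposition
`r_A = ⋂_{P ∈ S(A)} (ℓ_P, I_P^{t_P − 1})`, where `ℓ_P` is a (nonzero) linear form lying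
in `I_P` and vanishing at the dual point `ℓ∨`, and `(ℓ_P, I_P^{t_P−1}) = (ℓ_P) + I_P^{t_P−1}`
is primary with radical `I_P`.  In particular `√r_A = ⋂_{P ∈ S(A)} I_P`. -/
theorem stmt_5 {K : Type*} [Field K] [CharZero K] {n d : ℕ} (hn : 1 ≤ n) (hd : 2 ≤ d)
    (L : Fin d → MvPolynomial (Fin (n + 1)) K)
    (hhom : ∀ i, (L i).IsHomogeneous 1) (hne : ∀ i, L i ≠ 0)
    (hprop : ∀ i j, i ≠ j → ∀ c : K, L i ≠ c • L j) :
    ∃ p : MvPolynomial (Fin (n + 1)) K, p ≠ 0 ∧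
      ∀ a : Fin (n + 1) → K, eval a p ≠ 0 →
        ∀ lp : Ideal (MvPolynomial (Fin (n + 1)) K) → MvPolynomial (Fin (n + 1)) K,
          (∀ P ∈ singSupp L,
            lp P ≠ 0 ∧ (lp P).IsHomogeneous 1 ∧ lp P ∈ P ∧ eval a (lp P) = 0) →
          ((Ideal.span {∏ i, L i, lderiv a (∏ i, L i)}).colon (jacobianIdeal (∏ i, L i)) =
            ⨅ P ∈ singSupp L, (Ideal.span {lp P} ⊔ P ^ (tOf L P - 1))) ∧
          (∀ P ∈ singSupp L,
            (Ideal.span {lp P} ⊔ P ^ (tOf L P - 1)).IsPrimary ∧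
            (Ideal.span {lp P} ⊔ P ^ (tOf L P - 1)).radical = P) ∧
          (∀ P ∈ singSupp L,
            ¬ (⨅ P' ∈ singSupp L \ {P}, (Ideal.span {lp P'} ⊔ P' ^ (tOf L P' - 1))) ≤
              (Ideal.span {lp P} ⊔ P ^ (tOf L P - 1))) ∧
          ((Ideal.span {∏ i, L i, lderiv a (∏ i, L i)}).colon
              (jacobianIdeal (∏ i, L i))).radical = ⨅ P ∈ singSupp L, P := by
  refine ⟨∏ i, L i, Finset.prod_ne_zero_iff.2 fun i _ => hne i, fun a ha lp hlp => ?_⟩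
  rw [map_prod, Finset.prod_ne_zero_iff] at ha
  exact stmt_5_general ⟨hhom, hne, hprop⟩
    (fun P hP => Nat.cast_ne_zero.2 (by have := two_le_tOf hP; lia))
    (fun i => ha i (Finset.mem_univ i)) hlp
end

section
/- Let K have characteristic zero, let A be a hyperplane arrangement of d ≥ 2 hyperplanes in ℙⁿ, and let H ⊂ ℙⁿ be a hyperplane not in A, defined by a linear form x ∈ S. Then for a general linear form ℓ (general simultaneously for A and for A ∪ {H}), the general residuals with respect to ℓ satisfy r_{A∪{H}} : (x) = r_A. -/
open MvPolynomial

/-- The general residual of the arrangement with defining polynomial `f` with respect to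
the linear form with coefficient vector `a`: `r = (f, ∂f/∂ℓ) : Jac(f)`. -/
noncomputable def genResidual {K : Type*} [CommRing K] {m : ℕ} (a : Fin m → K)
    (f : MvPolynomial (Fin m) K) : Ideal (MvPolynomial (Fin m) K) :=
  (Ideal.span {f, lderiv a f}).colon (jacobianIdeal f)

/-!
Write `D = ∂/∂ℓ`. Modulo `x * f`, each `s * x * ∂ᵢ(x * f)` equals `x ^ 2 * (s * ∂ᵢf)`, so the claim
reduces to `(x * f, D (x * f)) : (x ^ 2) = (f, D f)`. Since `D (x * f) = D x * f + x * D f`, this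
holds once the prime `x` divides neither `f` nor `D x`. The latter is an open condition on `ℓ`:
`D x` has smaller degree than `x`, so it only has to be nonzero.
-/

section Derivative

variable {R : Type*} [CommRing R] {m : ℕ}

theorem lderiv_mul (a : Fin m → R) (f g : MvPolynomial (Fin m) R) :
    lderiv a (f * g) = lderiv a f * g + f * lderiv a g := by
  simp only [lderiv, pderiv_mul, smul_add, Finset.sum_add_distrib, Finset.sum_mul, Finset.mul_sum,
    smul_mul_assoc, mul_smul_comm]

theorem coeff_lderiv (a : Fin m → R) (f : MvPolynomial (Fin m) R) (μ : Fin m →₀ ℕ) :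
    coeff μ (lderiv a f) = ∑ i, a i * coeff μ (pderiv i f) := by
  simp only [lderiv, coeff_sum, coeff_smul, smul_eq_mul]

theorem totalDegree_lderiv_lt {a : Fin m → R} {f : MvPolynomial (Fin m) R}
    (h : lderiv a f ≠ 0) : (lderiv a f).totalDegree < f.totalDegree := by
  obtain ⟨μ, hμ, hdeg⟩ := Finset.exists_mem_eq_sup _ (support_nonempty.2 h)
    fun ν : Fin m →₀ ℕ => ν.sum fun _ e => e
  obtain ⟨i, -, hi⟩ : ∃ i ∈ Finset.univ, a i * coeff μ (pderiv i f) ≠ 0 :=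
    Finset.exists_ne_zero_of_sum_ne_zero (coeff_lderiv a f μ ▸ mem_support_iff.1 hμ)
  have hmem : μ + Finsupp.single i 1 ∈ f.support := by
    rw [coeff_pderiv] at hi
    exact mem_support_iff.2 (left_ne_zero_of_mul (right_ne_zero_of_mul hi))
  calc (lderiv a f).totalDegree = μ.degree := hdeg
    _ < (μ + Finsupp.single i 1).degree := by simp
    _ ≤ f.totalDegree := le_totalDegree hmem

theorem not_dvd_lderiv [IsDomain R] {a : Fin m → R} {f : MvPolynomial (Fin m) R}
    (h : lderiv a f ≠ 0) : ¬ f ∣ lderiv a f := fun hdvd =>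
  (totalDegree_lderiv_lt h).not_ge (totalDegree_le_of_dvd_of_isDomain hdvd h)

theorem exists_ne_zero_forall_lderiv_ne_zero {f : MvPolynomial (Fin m) R}
    (hf : ∃ i, pderiv i f ≠ 0) :
    ∃ p : MvPolynomial (Fin m) R, p ≠ 0 ∧ ∀ a, eval a p ≠ 0 → lderiv a f ≠ 0 := by
  obtain ⟨i, hi⟩ := hf
  obtain ⟨μ, hμ⟩ := ne_zero_iff.1 hi
  let p : MvPolynomial (Fin m) R := ∑ j, X j * C (coeff μ (pderiv j f))
  have eval_p (a : Fin m → R) : eval a p = coeff μ (lderiv a f) := by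
    simp only [p, map_sum, map_mul, eval_X, eval_C, coeff_lderiv]
  refine ⟨p, fun hp => hμ ?_, fun a ha h => ha ?_⟩
  · calc coeff μ (pderiv i f) = eval (Pi.single i 1) p := by
          simp [eval_p, coeff_lderiv, Pi.single_apply]
      _ = 0 := by rw [hp, map_zero]
  · rw [eval_p, h, coeff_zero]

end Derivative

section Forms

theorem exists_pderiv_ne_zero {σ R : Type*} [Finite σ] [CommRing R] [IsDomain R]
    {f : MvPolynomial σ R} {n : ℕ} (hf : f.IsHomogeneous n) (hn : (n : R) ≠ 0) (hf0 : f ≠ 0) :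
    ∃ i, pderiv i f ≠ 0 := by
  cases nonempty_fintype σ
  by_contra! h
  have euler : (n : R) • f = 0 := by
    rw [Nat.cast_smul_eq_nsmul, ← hf.sum_X_mul_pderiv]
    simp only [h, mul_zero, Finset.sum_const_zero]
  exact smul_ne_zero hn hf0 euler

theorem exists_eq_smul_of_dvd_of_totalDegree_le {σ R : Type*} [CommRing R] [IsDomain R]
    {f g : MvPolynomial σ R} (hdvd : f ∣ g) (hdeg : g.totalDegree ≤ f.totalDegree) :
    ∃ c : R, g = c • f := by
  obtain ⟨q, rfl⟩ := hdvd
  by_cases h : f * q = 0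
  · exact ⟨0, by rw [h, zero_smul]⟩
  obtain ⟨hf, hq⟩ := mul_ne_zero_iff.1 h
  rw [totalDegree_mul_of_isDomain hf hq] at hdeg
  have hq_const : q = C (coeff 0 q) := totalDegree_eq_zero_iff_eq_C.1 (by lia)
  exact ⟨coeff 0 q, by rw [smul_eq_C_mul, ← hq_const, mul_comm]⟩

variable {σ K : Type*} [Field K]

theorem prime_of_isHomogeneous_one_s6 {x : MvPolynomial σ K} (hx : x.IsHomogeneous 1)
    (hx0 : x ≠ 0) : Prime x := by
  refine (irreducible_of_totalDegree_eq_one (hx.totalDegree hx0) fun c hc => ?_).prime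
  obtain ⟨μ, hμ⟩ := ne_zero_iff.1 hx0
  exact (ne_zero_of_dvd_ne_zero hμ (hc μ)).isUnit

theorem not_dvd_of_forall_ne_smul {x y : MvPolynomial σ K} {n : ℕ} (hx : x.IsHomogeneous n)
    (hy : y.IsHomogeneous n) (hy0 : y ≠ 0) (h : ∀ c : K, x ≠ c • y) : ¬ x ∣ y := by
  intro hdvd
  have hx0 : x ≠ 0 := ne_zero_of_dvd_ne_zero hy0 hdvd
  obtain ⟨c, rfl⟩ := exists_eq_smul_of_dvd_of_totalDegree_le hdvd
    (by rw [hx.totalDegree hx0, hy.totalDegree hy0])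
  have hc : c ≠ 0 := left_ne_zero_of_smul hy0
  exact h c⁻¹ (inv_smul_smul₀ hc x).symm

theorem not_dvd_prod_of_forall_ne_smul {ι : Type*} {s : Finset ι} {L : ι → MvPolynomial σ K}
    {x : MvPolynomial σ K} {n : ℕ} (hprime : Prime x) (hx : x.IsHomogeneous n)
    (hL : ∀ i ∈ s, (L i).IsHomogeneous n) (hL0 : ∀ i ∈ s, L i ≠ 0)
    (h : ∀ i ∈ s, ∀ c : K, x ≠ c • L i) : ¬ x ∣ ∏ i ∈ s, L i := by
  rw [hprime.dvd_finsetProd_iff]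
  rintro ⟨i, hi, hdvd⟩
  exact not_dvd_of_forall_ne_smul hx (hL i hi) (hL0 i hi) (h i hi) hdvd

end Forms

section Residual

theorem sq_mul_mem_span_pair_iff {S : Type*} [CommRing S] [IsDomain S] {x f u : S}
    (hx : Prime x) (hf : ¬ x ∣ f) (hu : ¬ x ∣ u) (g y : S) :
    x ^ 2 * y ∈ Ideal.span {x * f, u * f + x * g} ↔ y ∈ Ideal.span {f, g} := by
  simp only [Ideal.mem_span_pair]
  constructor
  · rintro ⟨α, β, hαβ⟩
    have hβuf : x ∣ β * (u * f) := ⟨x * y - α * f - β * g, by linear_combination hαβ⟩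
    obtain ⟨β', rfl⟩ : x ∣ β := (hx.dvd_or_dvd hβuf).resolve_right (hx.not_dvd_mul hu hf)
    have hcancel : α * f + β' * (u * f + x * g) = x * y :=
      mul_left_cancel₀ hx.ne_zero (by linear_combination hαβ)
    have hαf : x ∣ (α + β' * u) * f := ⟨y - β' * g, by linear_combination hcancel⟩
    obtain ⟨γ, hγ⟩ : x ∣ α + β' * u := (hx.dvd_or_dvd hαf).resolve_right hf
    exact ⟨γ, β', mul_left_cancel₀ hx.ne_zero (by linear_combination hcancel - f * hγ)⟩
  · rintro ⟨γ, β, rfl⟩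
    exact ⟨γ * x - β * u, β * x, by ring⟩

variable {R : Type*} [CommRing R] {m : ℕ}

theorem mem_genResidual {a : Fin m → R} {f s : MvPolynomial (Fin m) R} :
    s ∈ genResidual a f ↔ ∀ i, s * pderiv i f ∈ Ideal.span {f, lderiv a f} := by
  simp only [genResidual, jacobianIdeal, Ideal.colon_span, Submodule.mem_colon,
    Set.forall_mem_range, smul_eq_mul]

theorem genResidual_mul_colon_span_singleton [IsDomain R] {a : Fin m → R}
    {x f : MvPolynomial (Fin m) R} (hx : Prime x) (hf : ¬ x ∣ f) (hxa : ¬ x ∣ lderiv a x) :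
    (genResidual a (x * f)).colon (Ideal.span {x}) = genResidual a f := by
  ext s
  rw [Ideal.mem_colon_span_singleton, mem_genResidual, mem_genResidual]
  refine forall_congr' fun i => ?_
  have leibniz : s * x * pderiv i (x * f) =
      x ^ 2 * (s * pderiv i f) + s * pderiv i x * (x * f) := by
    rw [pderiv_mul]
    ring
  have hmem : s * pderiv i x * (x * f) ∈ Ideal.span {x * f, lderiv a (x * f)} :=
    Ideal.mul_mem_left _ _ (Ideal.subset_span (Set.mem_insert _ _))
  rw [leibniz, Ideal.add_mem_iff_left _ hmem, lderiv_mul, sq_mul_mem_span_pair_iff hx hf hxa]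

end Residual

theorem stmt_6_general {R : Type*} [CommRing R] [IsDomain R] {m : ℕ}
    {x f : MvPolynomial (Fin m) R} (hx : Prime x) (hxd : ∃ i, pderiv i x ≠ 0) (hf : ¬ x ∣ f) :
    ∃ p : MvPolynomial (Fin m) R, p ≠ 0 ∧
      ∀ a : Fin m → R, eval a p ≠ 0 →
        (genResidual a (x * f)).colon (Ideal.span {x}) = genResidual a f := by
  obtain ⟨p, hp, hlderiv⟩ := exists_ne_zero_forall_lderiv_ne_zero hxd
  exact ⟨p, hp, fun a ha =>
    genResidual_mul_colon_span_singleton hx hf (not_dvd_lderiv (hlderiv a ha))⟩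

/-- Let `K` have characteristic zero, let `A` be a hyperplane arrangement
of `d ≥ 2` hyperplanes in `ℙⁿ` (given by pairwise non-proportional linear forms `L i`,
with `f_A = Π L i`), and let `H = V(x)` be a hyperplane not in `A`.  Then for a general
linear form `ℓ` (general simultaneously for `A` and `A ∪ {H}`), the general residuals
with respect to `ℓ` satisfy `r_{A∪{H}} : (x) = r_A`. -/
theorem stmt_6 {K : Type*} [Field K] [CharZero K] {n d : ℕ} (hd : 2 ≤ d)
    (L : Fin d → MvPolynomial (Fin (n + 1)) K)
    (hhom : ∀ i, (L i).IsHomogeneous 1) (hne : ∀ i, L i ≠ 0)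
    (hprop : ∀ i j, i ≠ j → ∀ c : K, L i ≠ c • L j)
    (x : MvPolynomial (Fin (n + 1)) K) (hx : x.IsHomogeneous 1) (hx0 : x ≠ 0)
    (hxnotinA : ∀ i, ∀ c : K, x ≠ c • L i) :
    ∃ p : MvPolynomial (Fin (n + 1)) K, p ≠ 0 ∧
      ∀ a : Fin (n + 1) → K, eval a p ≠ 0 →
        (genResidual a (x * ∏ i, L i)).colon (Ideal.span {x}) =
          genResidual a (∏ i, L i) := by
  have hprime : Prime x := prime_of_isHomogeneous_one_s6 hx hx0
  exact stmt_6_general hprime (exists_pderiv_ne_zero hx (by simp) hx0)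
    (not_dvd_prod_of_forall_ne_smul hprime hx (by simpa) (by simpa) (by simpa))
end

section
/- Let A be an arrangement of d ≥ 3 distinct lines in ℙ² over a field K of characteristic zero, with global Tjurina number τ(A) := Σ_{P ∈ S(A)} (t_P − 1)² (= deg Jac(f_A)). If the d lines of A are not all concurrent, then τ(A) ≤ d² − 3d + 3, and equality holds if and only if some d − 1 of the lines of A are concurrent (but not all d). -/
/-!
Write `m P = t_P - 1`. Every line `L` meets each of the other `d - 1` lines in exactly one point,
so `∑_{P ∈ L} m P = d - 1`. Summing over all lines gives `τ + ∑ m P = d (d - 1)`, hence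
`τ ≤ d² - 3d + 3` amounts to `2d - 3 ≤ ∑ m P`. Summing only over the lines through a fixed point
`Q` of multiplicity `t` gives `t (d - t) ≤ ∑_{P ≠ Q} m P`, because no other point lies on two of
these lines; therefore `∑ m P ≥ 2d - 3 + (t - 2) (d - 1 - t)`. In the case of equality every
multiplicity is `2` or `d - 1`. If none is `d - 1`, then all are `2` and `d > 3`, so that
`τ = ∑ m P = d (d - 1) / 2`, which differs from `d² - 3d + 3` by a multiple of `(d - 2) (d - 3)`.
Conversely, if `t = d - 1`, then
`τ ≥ m Q² + ∑_{P ≠ Q} m P ≥ (d - 2)² + (d - 1) = d² - 3d + 3`.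
-/

open Finset

namespace LineArrangement

section Combinatorics

variable {β : Type*} [SemilatticeInf β] {A : Finset β} {L M P Q : β}

/-- The multiplicity `t_P` of `P`: the number of lines of `A` through `P`. -/
def lineCount [DecidableLE β] (A : Finset β) (P : β) : ℕ :=
  #{L ∈ A | P ≤ L}

lemma lineCount_lt_card [DecidableLE β] (hP : ¬ ∀ L ∈ A, P ≤ L) : lineCount A P < #A := by
  push Not at hP
  exact card_lt_card (filter_ssubset.2 hP)

variable [DecidableEq β]

/-- The set `S(A)` of pairwise intersections of the lines of `A`. Lines and points are elements of
one meet-semilattice; that points are determined by any two lines through them is expressed by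
requiring `S(A)` to be an antichain. -/
def intersectionPoints (A : Finset β) : Finset β :=
  {p ∈ A ×ˢ A | p.1 ≠ p.2}.image fun p => p.1 ⊓ p.2

lemma mem_intersectionPoints :
    P ∈ intersectionPoints A ↔ ∃ L ∈ A, ∃ M ∈ A, L ≠ M ∧ L ⊓ M = P := by
  simp only [intersectionPoints, mem_image, mem_filter, mem_product, Prod.exists]
  tauto

lemma inf_mem_intersectionPoints (hL : L ∈ A) (hM : M ∈ A) (hLM : L ≠ M) :
    L ⊓ M ∈ intersectionPoints A :=
  mem_intersectionPoints.2 ⟨L, hL, M, hM, hLM, rfl⟩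

lemma inf_eq_of_le (hA : IsAntichain (· ≤ ·) (intersectionPoints A : Set β))
    (hP : P ∈ intersectionPoints A) (hL : L ∈ A) (hM : M ∈ A) (hLM : L ≠ M)
    (hPL : P ≤ L) (hPM : P ≤ M) : L ⊓ M = P :=
  (hA.eq hP (inf_mem_intersectionPoints hL hM hLM) (le_inf hPL hPM)).symm

variable [DecidableLE β]

/-- The global Tjurina number `τ(A)`. The subtraction does not truncate, as `t_P ≥ 2` on `S(A)`. -/
def tjurina (A : Finset β) : ℕ :=
  ∑ P ∈ intersectionPoints A, (lineCount A P - 1) ^ 2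

lemma two_le_lineCount (hP : P ∈ intersectionPoints A) : 2 ≤ lineCount A P := by
  obtain ⟨L, hL, M, hM, hne, rfl⟩ := mem_intersectionPoints.1 hP
  exact one_lt_card.2
    ⟨L, mem_filter.2 ⟨hL, inf_le_left⟩, M, mem_filter.2 ⟨hM, inf_le_right⟩, hne⟩

lemma exists_ge_of_two_le_lineCount (hP : 2 ≤ lineCount A P) :
    ∃ Q ∈ intersectionPoints A, P ≤ Q := by
  obtain ⟨L, hL, M, hM, hne⟩ := one_lt_card.1 hP
  rw [mem_filter] at hL hM
  exact ⟨L ⊓ M, inf_mem_intersectionPoints hL.1 hM.1 hne, le_inf hL.2 hM.2⟩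

lemma sum_lineCount_sub_one_of_mem
    (hA : IsAntichain (· ≤ ·) (intersectionPoints A : Set β)) (hL : L ∈ A) :
    ∑ P ∈ intersectionPoints A with P ≤ L, (lineCount A P - 1) = #A - 1 := by
  have inf_mem : ∀ M ∈ A.erase L, L ⊓ M ∈ {P ∈ intersectionPoints A | P ≤ L} := fun M hM =>
    mem_filter.2 ⟨inf_mem_intersectionPoints hL (mem_of_mem_erase hM) (ne_of_mem_erase hM).symm,
      inf_le_left⟩
  rw [← card_erase_of_mem hL, card_eq_sum_card_fiberwise inf_mem]
  refine sum_congr rfl fun P hP => ?_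
  obtain ⟨hPS, hPL⟩ := mem_filter.1 hP
  rw [lineCount, ← card_erase_of_mem (mem_filter.2 ⟨hL, hPL⟩)]
  congr 1
  ext M
  simp only [mem_erase, mem_filter]
  constructor
  · rintro ⟨hne, hM, hPM⟩
    exact ⟨⟨hne, hM⟩, inf_eq_of_le hA hPS hL hM hne.symm hPL hPM⟩
  · rintro ⟨⟨hne, hM⟩, rfl⟩
    exact ⟨hne, hM, inf_le_right⟩

lemma sum_lineCount_mul (hA : IsAntichain (· ≤ ·) (intersectionPoints A : Set β)) :
    ∑ P ∈ intersectionPoints A, lineCount A P * (lineCount A P - 1) = #A * (#A - 1) :=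
  calc
    _ = ∑ P ∈ intersectionPoints A, ∑ L ∈ A with P ≤ L, (lineCount A P - 1) := by
      simp only [sum_const, smul_eq_mul, lineCount]
    _ = ∑ L ∈ A, ∑ P ∈ intersectionPoints A with P ≤ L, (lineCount A P - 1) :=
      sum_comm' (by simp only [mem_filter]; tauto)
    _ = ∑ L ∈ A, (#A - 1) := sum_congr rfl fun _ hL => sum_lineCount_sub_one_of_mem hA hL
    _ = #A * (#A - 1) := by rw [sum_const, smul_eq_mul]

lemma tjurina_add_sum_lineCount_sub_one
    (hA : IsAntichain (· ≤ ·) (intersectionPoints A : Set β)) :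
    tjurina A + ∑ P ∈ intersectionPoints A, (lineCount A P - 1) = #A * (#A - 1) := by
  rw [← sum_lineCount_mul hA, tjurina, ← sum_add_distrib]
  refine sum_congr rfl fun P hP => ?_
  obtain ⟨m, hm⟩ := Nat.exists_eq_add_of_le' (two_le_lineCount hP)
  rw [hm, Nat.add_sub_assoc one_le_two]
  ring

lemma lineCount_mul_le_sum_erase (hA : IsAntichain (· ≤ ·) (intersectionPoints A : Set β))
    (hQ : Q ∈ intersectionPoints A) :
    lineCount A Q * (#A - lineCount A Q) ≤
      ∑ P ∈ (intersectionPoints A).erase Q, (lineCount A P - 1) := by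
  let pointsOn (L : β) : Finset β := {P ∈ intersectionPoints A | P ≤ L}
  have sum_pointsOn : ∀ L ∈ A, Q ≤ L →
      ∑ P ∈ (pointsOn L).erase Q, (lineCount A P - 1) = #A - lineCount A Q := by
    intro L hL hQL
    have hline : ∑ P ∈ pointsOn L, (lineCount A P - 1) = #A - 1 :=
      sum_lineCount_sub_one_of_mem hA hL
    have hQmem : Q ∈ pointsOn L := mem_filter.2 ⟨hQ, hQL⟩
    rw [← add_sum_erase _ _ hQmem] at hline
    have := two_le_lineCount hQ
    omega
  have disjoint_pointsOn : (({L ∈ A | Q ≤ L} : Finset β) : Set β).PairwiseDisjoint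
      fun L => (pointsOn L).erase Q := by
    intro L hL M hM hne
    refine disjoint_left.2 fun P hPL hPM => ?_
    simp only [coe_filter, Set.mem_ofPred_eq, pointsOn, mem_erase, mem_filter] at hL hM hPL hPM
    have hP := inf_eq_of_le hA hPL.2.1 hL.1 hM.1 hne hPL.2.2 hPM.2.2
    exact hPL.1 (hP.symm.trans (inf_eq_of_le hA hQ hL.1 hM.1 hne hL.2 hM.2))
  calc
    lineCount A Q * (#A - lineCount A Q)
      = ∑ L ∈ A with Q ≤ L, ∑ P ∈ (pointsOn L).erase Q, (lineCount A P - 1) := by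
        rw [sum_congr rfl fun L hL => sum_pointsOn L (mem_filter.1 hL).1 (mem_filter.1 hL).2,
          sum_const, smul_eq_mul, lineCount]
    _ = ∑ P ∈ ({L ∈ A | Q ≤ L} : Finset β).biUnion fun L => (pointsOn L).erase Q,
          (lineCount A P - 1) := (sum_biUnion disjoint_pointsOn).symm
    _ ≤ ∑ P ∈ (intersectionPoints A).erase Q, (lineCount A P - 1) :=
      sum_le_sum_of_subset (biUnion_subset.2 fun _ _ => erase_subset_erase Q (filter_subset _ _))

lemma two_mul_card_add_le_sum (hA : IsAntichain (· ≤ ·) (intersectionPoints A : Set β))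
    (hQ : Q ∈ intersectionPoints A) (hQA : lineCount A Q < #A) :
    2 * #A + (lineCount A Q - 2) * (#A - 1 - lineCount A Q) ≤
      ∑ P ∈ intersectionPoints A, (lineCount A P - 1) + 3 := by
  obtain ⟨a, ha⟩ := Nat.exists_eq_add_of_le' (two_le_lineCount hQ)
  obtain ⟨b, hb⟩ := Nat.exists_eq_add_of_lt hQA
  have hle := lineCount_mul_le_sum_erase hA hQ
  rw [← add_sum_erase _ _ hQ, show #A - 1 - lineCount A Q = b by omega, hb, ha]
  rw [show #A - lineCount A Q = b + 1 by omega, ha] at hle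
  simp only [Nat.add_sub_cancel, Nat.reduceSubDiff]
  -- `(t - 1) + t (d - t) = (2d - 3) + (t - 2) (d - 1 - t)` with `t = a + 2` and `d = t + b + 1`
  linarith

lemma tjurina_add_le (hA : IsAntichain (· ≤ ·) (intersectionPoints A : Set β))
    (hQ : Q ∈ intersectionPoints A) (hQA : lineCount A Q < #A) :
    tjurina A + 3 * #A + (lineCount A Q - 2) * (#A - 1 - lineCount A Q) ≤ #A ^ 2 + 3 := by
  have hsum := tjurina_add_sum_lineCount_sub_one hA
  have hle := two_mul_card_add_le_sum hA hQ hQA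
  have hsq : #A * (#A - 1) + #A = #A ^ 2 := by
    rw [← Nat.mul_succ, Nat.succ_eq_add_one, Nat.sub_add_cancel (Nat.one_le_of_lt hQA), sq]
  linarith

lemma tjurina_add_three_mul_card_le
    (hA : IsAntichain (· ≤ ·) (intersectionPoints A : Set β))
    (hlt : ∀ P ∈ intersectionPoints A, lineCount A P < #A) :
    tjurina A + 3 * #A ≤ #A ^ 2 + 3 := by
  rcases (intersectionPoints A).eq_empty_or_nonempty with hempty | ⟨Q, hQ⟩
  · rw [tjurina, hempty, sum_empty]
    nlinarith [sq_nonneg ((#A : ℤ) - 1)]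
  · exact le_of_add_le_left (tjurina_add_le hA hQ (hlt Q hQ))

lemma sq_add_lineCount_mul_le_tjurina (hA : IsAntichain (· ≤ ·) (intersectionPoints A : Set β))
    (hQ : Q ∈ intersectionPoints A) :
    (lineCount A Q - 1) ^ 2 + lineCount A Q * (#A - lineCount A Q) ≤ tjurina A := by
  rw [tjurina, ← add_sum_erase _ _ hQ]
  gcongr
  exact (lineCount_mul_le_sum_erase hA hQ).trans
    (sum_le_sum fun P _ => Nat.le_self_pow two_ne_zero _)

lemma lineCount_eq_two_of_tjurina_eq
    (hA : IsAntichain (· ≤ ·) (intersectionPoints A : Set β))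
    (heq : tjurina A + 3 * #A = #A ^ 2 + 3) (hQ : Q ∈ intersectionPoints A)
    (hQA : lineCount A Q < #A - 1) : lineCount A Q = 2 := by
  have hle := tjurina_add_le hA hQ (hQA.trans_le (Nat.sub_le _ _))
  have hprod : (lineCount A Q - 2) * (#A - 1 - lineCount A Q) = 0 := by omega
  have := two_le_lineCount hQ
  rcases Nat.mul_eq_zero.1 hprod with h | h <;> omega

lemma exists_card_sub_one_le_lineCount
    (hA : IsAntichain (· ≤ ·) (intersectionPoints A : Set β))
    (heq : tjurina A + 3 * #A = #A ^ 2 + 3) :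
    ∃ Q ∈ intersectionPoints A, #A - 1 ≤ lineCount A Q := by
  by_contra! hlt
  have htwo : ∀ P ∈ intersectionPoints A, lineCount A P = 2 := fun P hP =>
    lineCount_eq_two_of_tjurina_eq hA heq hP (hlt P hP)
  have tjurina_eq_sum : tjurina A = ∑ P ∈ intersectionPoints A, (lineCount A P - 1) :=
    sum_congr rfl fun P hP => by rw [htwo P hP]; rfl
  have tjurina_pos : tjurina A ≠ 0 := by
    intro h
    nlinarith [sq_nonneg (2 * (#A : ℤ) - 3)]
  obtain ⟨Q, hQ, -⟩ := exists_ne_zero_of_sum_ne_zero tjurina_pos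
  have hcard : 2 < #A - 1 := htwo Q hQ ▸ hlt Q hQ
  have hsum := tjurina_add_sum_lineCount_sub_one hA
  rw [← tjurina_eq_sum] at hsum
  obtain ⟨n, hn⟩ := Nat.exists_eq_add_of_le' (show 4 ≤ #A by omega)
  rw [hn] at heq hsum
  rw [Nat.add_sub_assoc (by norm_num)] at hsum
  nlinarith

lemma tjurina_add_three_mul_card_eq_iff
    (hA : IsAntichain (· ≤ ·) (intersectionPoints A : Set β))
    (hlt : ∀ P ∈ intersectionPoints A, lineCount A P < #A) :
    tjurina A + 3 * #A = #A ^ 2 + 3 ↔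
      ∃ Q ∈ intersectionPoints A, #A - 1 ≤ lineCount A Q := by
  refine ⟨exists_card_sub_one_le_lineCount hA, fun ⟨Q, hQ, hQA⟩ =>
    (tjurina_add_three_mul_card_le hA hlt).antisymm ?_⟩
  have hle := sq_add_lineCount_mul_le_tjurina hA hQ
  have hcard : #A = lineCount A Q + 1 := by have := hlt Q hQ; omega
  obtain ⟨a, ha⟩ := Nat.exists_eq_add_of_le' (two_le_lineCount hQ)
  rw [hcard, ha] at hle ⊢
  simp only [Nat.add_sub_cancel_left, Nat.reduceSubDiff] at hle
  linarith

end Combinatorics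

section Subspaces

variable {K V : Type*} [DivisionRing K] [AddCommGroup V] [Module K V] [FiniteDimensional K V]

lemma isAntichain_of_finrank_eq {S : Set (Submodule K V)} {n : ℕ}
    (hS : ∀ P ∈ S, Module.finrank K P = n) : IsAntichain (· ≤ ·) S :=
  fun P hP Q hQ hne hPQ =>
    hne (Submodule.eq_of_le_of_finrank_eq hPQ ((hS P hP).trans (hS Q hQ).symm))

lemma finrank_inf_eq_of_finrank_eq_succ {n : ℕ} {L M : Submodule K V}
    (hV : Module.finrank K V = n + 2) (hL : Module.finrank K L = n + 1)
    (hM : Module.finrank K M = n + 1) (hLM : L ≠ M) :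
    Module.finrank K (L ⊓ M : Submodule K V) = n := by
  have hlt : L < L ⊔ M := left_lt_sup.2 fun hML =>
    hLM (Submodule.eq_of_le_of_finrank_eq hML (hM.trans hL.symm)).symm
  have := Submodule.finrank_lt_finrank_of_lt hlt
  have := Submodule.finrank_le (L ⊔ M)
  have := Submodule.finrank_sup_add_finrank_inf_eq L M
  omega

lemma exists_mem_intersectionPoints_iff [DecidableEq (Submodule K V)]
    [DecidableLE (Submodule K V)] {A : Finset (Submodule K V)} {k n : ℕ}
    (hA : ∀ P ∈ intersectionPoints A, Module.finrank K P = n) (hk : 2 ≤ k) :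
    (∃ P ∈ intersectionPoints A, k ≤ lineCount A P) ↔
      ∃ P : Submodule K V, Module.finrank K P = n ∧ k ≤ lineCount A P := by
  refine ⟨fun ⟨P, hP, hkP⟩ => ⟨P, hA P hP, hkP⟩, fun ⟨P, hP, hkP⟩ => ?_⟩
  obtain ⟨Q, hQ, hPQ⟩ := exists_ge_of_two_le_lineCount (hk.trans hkP)
  obtain rfl := Submodule.eq_of_le_of_finrank_eq hPQ (hP.trans (hA Q hQ).symm)
  exact ⟨P, hQ, hkP⟩

end Subspaces

end LineArrangement

open LineArrangement

open Classical in
theorem stmt_11_general {K V : Type*} [DivisionRing K] [AddCommGroup V] [Module K V] {d : ℕ}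
    (hV : Module.finrank K V = 3)
    (A : Finset (Submodule K V)) (hcard : #A = d) (hd : 3 ≤ d)
    (hlines : ∀ L ∈ A, Module.finrank K L = 2)
    (hnotconc : ¬ ∃ P : Submodule K V, Module.finrank K P = 1 ∧ ∀ L ∈ A, P ≤ L) :
    tjurina A ≤ d ^ 2 - 3 * d + 3 ∧
    (tjurina A = d ^ 2 - 3 * d + 3 ↔
      ∃ P : Submodule K V, Module.finrank K P = 1 ∧ d - 1 ≤ lineCount A P) := by
  have : FiniteDimensional K V := Module.finite_of_finrank_pos (by omega)
  subst hcard
  have hpoints : ∀ P ∈ intersectionPoints A, Module.finrank K P = 1 := by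
    intro P hP
    obtain ⟨L, hL, M, hM, hne, rfl⟩ := mem_intersectionPoints.1 hP
    exact finrank_inf_eq_of_finrank_eq_succ hV (hlines L hL) (hlines M hM) hne
  have hA : IsAntichain (· ≤ ·) (intersectionPoints A : Set (Submodule K V)) :=
    isAntichain_of_finrank_eq hpoints
  have hlt : ∀ P ∈ intersectionPoints A, lineCount A P < #A := fun P hP =>
    lineCount_lt_card fun hall => hnotconc ⟨P, hpoints P hP, hall⟩
  have hle := tjurina_add_three_mul_card_le hA hlt
  have hsub : 3 * #A ≤ #A ^ 2 := by nlinarith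
  rw [← exists_mem_intersectionPoints_iff hpoints (by omega),
    ← tjurina_add_three_mul_card_eq_iff hA hlt]
  omega

open Classical in
/-- Let `A` be an arrangement of `d ≥ 3` distinct lines in `ℙ²` over a
field `K` of characteristic zero, with global Tjurina number
`τ(A) = Σ_{P ∈ S(A)} (t_P − 1)²`.  If the `d` lines of `A` are not all concurrent (there
is no point, i.e. 1-dimensional subspace, contained in all of them), then
`τ(A) ≤ d² − 3d + 3`, with equality iff some `d − 1` of the lines of `A` are concurrent
(but not all `d`, which is the standing assumption). -/
theorem stmt_11 {K V : Type*} [Field K] [CharZero K] [AddCommGroup V] [Module K V]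
    [FiniteDimensional K V] {d : ℕ}
    (hV : Module.finrank K V = 3)
    (A : Finset (Submodule K V)) (hcard : A.card = d) (hd : 3 ≤ d)
    (hlines : ∀ L ∈ A, Module.finrank K L = 2)
    (hnotconc : ¬ ∃ P : Submodule K V, Module.finrank K P = 1 ∧ ∀ L ∈ A, P ≤ L) :
    (∑ P ∈ ((A ×ˢ A).filter (fun p => p.1 ≠ p.2)).image (fun p => p.1 ⊓ p.2),
        ((A.filter (fun L => P ≤ L)).card - 1) ^ 2) ≤ d ^ 2 - 3 * d + 3 ∧
    ((∑ P ∈ ((A ×ˢ A).filter (fun p => p.1 ≠ p.2)).image (fun p => p.1 ⊓ p.2),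
        ((A.filter (fun L => P ≤ L)).card - 1) ^ 2) = d ^ 2 - 3 * d + 3 ↔
      ∃ P : Submodule K V, Module.finrank K P = 1 ∧
        d - 1 ≤ (A.filter (fun L => P ≤ L)).card) :=
  stmt_11_general hV A hcard hd hlines hnotconc
end

section
/- Let K have characteristic zero and let f = ℓ₁⋯ℓ_d ∈ K[x₀,…,xₙ] be a product of d ≥ 2 pairwise non-proportional linear forms, defining a hyperplane arrangement A in ℙⁿ. Then the Jacobian ideal Jac(f) can be generated by two elements (equivalently, Jac(f) is a complete intersection) if and only if all the hyperplanes of A contain a common linear subspace of ℙⁿ of dimension n − 2, i.e. if and only if the linear forms ℓ₁,…,ℓ_d span a K-vector subspace of dimension at most 2 of the space of linear forms. -/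
open MvPolynomial

/-!
The partial derivatives of `f = ℓ₁⋯ℓ_d` and the forms `ℓⱼ` are governed by one matrix `M`, whose
`j`-th column lists the coefficients of `ℓⱼ`: writing `Pⱼ = ∏_{k ≠ j} ℓₖ`, we have
`∂ᵢf = ∑ⱼ Mᵢⱼ Pⱼ` and `ℓⱼ = ∑ᵢ Mᵢⱼ xᵢ`. The variables are linearly independent, and so are
the `Pⱼ`, because `ℓⱼ` is a prime dividing every `Pₖ` except `Pⱼ`. Hence the partial derivatives
span a space whose dimension is the row rank of `M`, and the forms one whose dimension is the
column rank. Finally, the `∂ᵢf` are all homogeneous of degree `d - 1`, so the minimal number of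
generators of the ideal they generate is the dimension of their linear span: the components of
degree `d - 1` of any ideal generators already span the `∂ᵢf` linearly.
-/

section Generators

open Submodule

lemma finrank_eq_spanFinrank {R M : Type*} [Semiring R] [StrongRankCondition R] [AddCommMonoid M]
    [Module R M] (N : Submodule R M) [Module.Free R N] : Module.finrank R N = N.spanFinrank :=
  Module.finrank_eq_spanFinrank_of_free.trans N.spanFinrank_top

lemma exists_fin_span_range_eq_iff_spanFinrank_le {R M : Type*} [Semiring R] [AddCommMonoid M]
    [Module R M] {N : Submodule R M} (hN : N.FG) {r : ℕ} :
    (∃ g : Fin r → M, N = span R (Set.range g)) ↔ N.spanFinrank ≤ r := by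
  constructor
  · rintro ⟨g, rfl⟩
    calc (span R (Set.range g)).spanFinrank
        ≤ (Set.range g).ncard := spanFinrank_span_le_ncard_of_finite (Set.finite_range g)
      _ ≤ (Set.univ : Set (Fin r)).ncard := Set.image_univ (f := g) ▸ Set.ncard_image_le
      _ = r := by simp
  · intro hr
    obtain ⟨t, ht, rfl⟩ := hN.exists_span_finset_card_eq_spanFinrank
    have hcard : t.card ≤ r := ht ▸ hr
    refine ⟨Function.extend (Fin.castLE hcard) (fun k => (t.equivFin.symm k : M)) 0, ?_⟩
    have hrange : Set.range (fun k => (t.equivFin.symm k : M)) = t := by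
      rw [← Function.comp_def, EquivLike.range_comp, Subtype.range_coe]
    rw [Set.range_extend (Fin.castLE_injective hcard), hrange, span_union, left_eq_sup, span_le]
    rintro _ ⟨_, -, rfl⟩
    exact zero_mem _

lemma spanFinrank_span_le_of_tower (R : Type*) {A M : Type*} [Semiring R] [Semiring A]
    [AddCommMonoid M] [SMul R A] [Module R M] [Module A M] [IsScalarTower R A M]
    {s : Set M} (hs : s.Finite) :
    (span A s).spanFinrank ≤ (span R s).spanFinrank := by
  obtain ⟨t, htcard, htspan⟩ := (fg_span hs : (span R s).FG).exists_span_finset_card_eq_spanFinrank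
  rw [← span_span_of_tower R A s, ← htspan, span_span_of_tower, htspan, ← htcard,
    ← Set.ncard_coe_finset]
  exact spanFinrank_span_le_ncard_of_finite t.finite_toSet

end Generators

section LinearAlgebra

variable {K V ι : Type*} [Field K] [AddCommGroup V] [Module K V]

lemma exists_fin_forall_mem_span_range_iff_finrank_le [Finite ι] {x : ι → V} {r : ℕ} :
    (∃ u : Fin r → V, ∀ i, x i ∈ Submodule.span K (Set.range u)) ↔
      Module.finrank K (Submodule.span K (Set.range x)) ≤ r := by
  constructor
  · rintro ⟨u, hu⟩
    have := Module.Finite.span_of_finite K (Set.finite_range u)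
    calc Module.finrank K (Submodule.span K (Set.range x))
        ≤ Module.finrank K (Submodule.span K (Set.range u)) :=
          Submodule.finrank_mono (Submodule.span_le.2 (Set.range_subset_iff.2 hu))
      _ ≤ r := (finrank_range_le_card u).trans_eq (Fintype.card_fin r)
  · intro hr
    rw [finrank_eq_spanFinrank, ← exists_fin_span_range_eq_iff_spanFinrank_le
      (Submodule.fg_span (Set.finite_range x))] at hr
    obtain ⟨u, hu⟩ := hr
    exact ⟨u, fun i => hu ▸ Submodule.subset_span (Set.mem_range_self i)⟩

lemma finrank_span_range_sum_smul_eq_rank [Fintype ι] {κ : Type*} [Finite κ] {b : ι → V}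
    (hb : LinearIndependent K b) (A : Matrix κ ι K) :
    Module.finrank K (Submodule.span K (Set.range fun k => ∑ i, A k i • b i)) = A.rank := by
  have hrange : (Set.range fun k => ∑ i, A k i • b i) =
      Fintype.linearCombination K b '' Set.range A.row := by
    rw [← Set.range_comp]
    rfl
  rw [hrange, Submodule.span_image, finrank_eq_spanFinrank,
    Submodule.spanFinrank_map_eq_of_injective _ hb.fintypeLinearCombination_injective,
    ← finrank_eq_spanFinrank, A.rank_eq_finrank_span_row]

end LinearAlgebra

lemma linearIndependent_prod_erase {K A ι : Type*} [Field K] [CommRing A] [Algebra K A]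
    [Fintype ι] [DecidableEq ι] {p : ι → A} (hprime : ∀ i, Prime (p i))
    (hdvd : Pairwise fun i j => ¬p i ∣ p j) :
    LinearIndependent K fun j => ∏ k ∈ Finset.univ.erase j, p k := by
  rw [Fintype.linearIndependent_iff]
  intro a ha k
  by_contra hak
  have hdvd_others : p k ∣ ∑ j ∈ Finset.univ.erase k, a j • ∏ l ∈ Finset.univ.erase j, p l :=
    Finset.dvd_sum fun j hj => dvd_smul_of_dvd _ <| Finset.dvd_prod_of_mem p <|
      Finset.mem_erase.2 ⟨(Finset.ne_of_mem_erase hj).symm, Finset.mem_univ k⟩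
  have hdvd_smul : p k ∣ a k • ∏ l ∈ Finset.univ.erase k, p l := by
    rw [← Finset.add_sum_erase _ _ (Finset.mem_univ k)] at ha
    rwa [eq_neg_of_add_eq_zero_left ha, dvd_neg]
  have hdvd_prod : p k ∣ ∏ l ∈ Finset.univ.erase k, p l := by
    simpa only [inv_smul_smul₀ hak] using dvd_smul_of_dvd (a k)⁻¹ hdvd_smul
  obtain ⟨j, hj, hkj⟩ := ((hprime k).dvd_finsetProd_iff _).1 hdvd_prod
  exact hdvd (Finset.ne_of_mem_erase hj).symm hkj

lemma derivation_finset_prod {R A M ι : Type*} [CommSemiring R] [CommSemiring A] [AddCommMonoid M]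
    [Algebra R A] [Module A M] [Module R M] [DecidableEq ι] (D : Derivation R A M)
    (s : Finset ι) (p : ι → A) :
    D (∏ j ∈ s, p j) = ∑ j ∈ s, (∏ k ∈ s.erase j, p k) • D (p j) := by
  induction s using Finset.induction_on with
  | empty => simp
  | insert a s ha ih =>
    have herase : ∀ j ∈ s, (∏ k ∈ (insert a s).erase j, p k) = p a * ∏ k ∈ s.erase j, p k := by
      intro j hj
      rw [Finset.erase_insert_of_ne (ne_of_mem_of_not_mem hj ha).symm,
        Finset.prod_insert (fun h => ha (Finset.mem_of_mem_erase h))]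
    rw [Finset.prod_insert ha, D.leibniz, ih, Finset.smul_sum, add_comm, Finset.sum_insert ha,
      Finset.erase_insert ha]
    congr 1
    exact Finset.sum_congr rfl fun j hj => by rw [herase j hj, mul_smul]

section EqualDegree

variable {R σ : Type*} [CommSemiring R] {e : ℕ}

lemma homogeneousComponent_mul_of_isHomogeneous {p : MvPolynomial σ R}
    (hp : p.IsHomogeneous e) (q : MvPolynomial σ R) :
    homogeneousComponent e (q * p) = coeff 0 q • p := by
  have hcomponent : ∀ k, homogeneousComponent e (homogeneousComponent k q * p) =
      if e = k + e then homogeneousComponent k q * p else 0 := fun k =>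
    homogeneousComponent_of_mem ((homogeneousComponent_isHomogeneous k q).mul hp)
  conv_lhs => rw [← sum_homogeneousComponent q, Finset.sum_mul, map_sum]
  simp [hcomponent, smul_eq_C_mul]

lemma exists_eq_smul_of_dvd_of_isHomogeneous {p q : MvPolynomial σ R}
    (hp : p.IsHomogeneous e) (hq : q.IsHomogeneous e) (hdvd : p ∣ q) : ∃ c : R, q = c • p := by
  obtain ⟨r, rfl⟩ := hdvd
  refine ⟨coeff 0 r, ?_⟩
  rw [← homogeneousComponent_mul_of_isHomogeneous hp, mul_comm r, homogeneousComponent_eq_self hq]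

lemma homogeneousComponent_mul_of_mem_span {s : Set (MvPolynomial σ R)}
    (hs : ∀ p ∈ s, p.IsHomogeneous e) {p : MvPolynomial σ R} (hp : p ∈ Ideal.span s)
    (q : MvPolynomial σ R) :
    homogeneousComponent e (q * p) = coeff 0 q • homogeneousComponent e p := by
  induction hp using Submodule.span_induction generalizing q with
  | mem x hx =>
    rw [homogeneousComponent_mul_of_isHomogeneous (hs x hx), homogeneousComponent_eq_self (hs x hx)]
  | zero => simp
  | add x y _ _ hx hy => rw [mul_add, map_add, map_add, hx, hy, smul_add]
  | smul a x _ hx =>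
    rw [smul_eq_mul, ← mul_assoc, hx, hx, smul_smul]
    simp only [← constantCoeff_eq, map_mul]

lemma span_le_span_image_homogeneousComponent {s t : Set (MvPolynomial σ R)}
    (hs : ∀ p ∈ s, p.IsHomogeneous e) (hst : Ideal.span s = Ideal.span t) :
    Submodule.span R s ≤ Submodule.span R (homogeneousComponent e '' t) := by
  have hcomponent : ∀ p ∈ Ideal.span t,
      homogeneousComponent e p ∈ Submodule.span R (homogeneousComponent e '' t) := by
    intro p hp
    induction hp using Submodule.span_induction with
    | mem x hx => exact Submodule.subset_span (Set.mem_image_of_mem _ hx)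
    | zero => simp
    | add x y _ _ hx hy => exact map_add (homogeneousComponent e) x y ▸ add_mem hx hy
    | smul a x hx ih =>
      rw [smul_eq_mul, homogeneousComponent_mul_of_mem_span hs (hst ▸ hx)]
      exact Submodule.smul_mem _ _ ih
  rw [Submodule.span_le]
  intro p hp
  rw [← homogeneousComponent_eq_self (hs p hp)]
  exact hcomponent p (hst ▸ Ideal.subset_span hp)

lemma spanFinrank_ideal_span_of_isHomogeneous {K : Type*} [Field K] {s : Set (MvPolynomial σ K)}
    (hfin : s.Finite) (hs : ∀ p ∈ s, p.IsHomogeneous e) :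
    (Ideal.span s).spanFinrank = Module.finrank K (Submodule.span K s) := by
  classical
  refine le_antisymm ?_ ?_
  · rw [finrank_eq_spanFinrank]
    exact spanFinrank_span_le_of_tower K hfin
  · obtain ⟨t, htcard, htspan⟩ :=
      (Submodule.fg_span hfin : (Ideal.span s).FG).exists_span_finset_card_eq_spanFinrank
    have hle := span_le_span_image_homogeneousComponent hs htspan.symm
    rw [← Finset.coe_image] at hle
    calc Module.finrank K (Submodule.span K s)
        ≤ Module.finrank K (Submodule.span K (t.image ⇑(homogeneousComponent e) :
            Set (MvPolynomial σ K))) :=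
          Submodule.finrank_mono hle
      _ ≤ (t.image (homogeneousComponent e)).card := finrank_span_finset_le_card _
      _ ≤ t.card := Finset.card_image_le
      _ = (Ideal.span s).spanFinrank := htcard

end EqualDegree

section LinearForms

variable {σ ι : Type*}

/-- The coefficient matrix of a family of linear forms: column `j` lists the coefficients of the
variables in `L j`. -/
noncomputable def coeffMatrix {R : Type*} [CommSemiring R] (L : ι → MvPolynomial σ R) :
    Matrix σ ι R :=
  Matrix.of fun i j => coeff (Finsupp.single i 1) (L j)

lemma pderiv_eq_C_coeffMatrix {R : Type*} [CommSemiring R] {L : ι → MvPolynomial σ R}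
    (hL : ∀ j, (L j).IsHomogeneous 1) (i : σ) (j : ι) :
    pderiv i (L j) = C (coeffMatrix L i j) := by
  rw [← homogeneousComponent_eq_self (hL j).pderiv, homogeneousComponent_zero, coeff_pderiv]
  simp [coeffMatrix]

lemma sum_coeffMatrix_smul_X {R : Type*} [CommSemiring R] [Fintype σ] {L : ι → MvPolynomial σ R}
    (hL : ∀ j, (L j).IsHomogeneous 1) (j : ι) :
    ∑ i, coeffMatrix L i j • X i = L j := by
  simpa only [pderiv_eq_C_coeffMatrix hL, smul_eq_C_mul, mul_comm (X _), one_smul] using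
    (hL j).sum_X_mul_pderiv

lemma pderiv_prod_eq_sum_coeffMatrix_smul {R : Type*} [CommSemiring R] [Fintype ι] [DecidableEq ι]
    {L : ι → MvPolynomial σ R} (hL : ∀ j, (L j).IsHomogeneous 1) (i : σ) :
    pderiv i (∏ j, L j) = ∑ j, coeffMatrix L i j • ∏ k ∈ Finset.univ.erase j, L k := by
  rw [derivation_finset_prod]
  exact Finset.sum_congr rfl fun j _ => by
    rw [pderiv_eq_C_coeffMatrix hL, smul_eq_mul, smul_eq_C_mul, mul_comm]

variable {K : Type*} [Field K]

lemma prime_of_isHomogeneous_one_s13 {p : MvPolynomial σ K} (hp : p.IsHomogeneous 1) (hp0 : p ≠ 0) :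
    Prime p := by
  refine (irreducible_of_totalDegree_eq_one (hp.totalDegree hp0) fun x hx => ?_).prime
  obtain ⟨m, hm⟩ := ne_zero_iff.1 hp0
  exact isUnit_of_dvd_unit (hx m) (isUnit_iff_ne_zero.2 hm)

variable [Finite σ] [Fintype ι] {L : ι → MvPolynomial σ K}

lemma finrank_span_range_eq_rank_coeffMatrix (hL : ∀ j, (L j).IsHomogeneous 1) :
    Module.finrank K (Submodule.span K (Set.range L)) = (coeffMatrix L).rank := by
  cases nonempty_fintype σ
  have hcolumns : (fun j => ∑ i, (coeffMatrix L).transpose j i • X i) = L :=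
    funext (sum_coeffMatrix_smul_X hL)
  rw [← Matrix.rank_transpose,
    ← finrank_span_range_sum_smul_eq_rank (linearIndependent_X σ K), hcolumns]

lemma finrank_span_range_pderiv_prod_eq_rank_coeffMatrix (hL : ∀ j, (L j).IsHomogeneous 1)
    (hL0 : ∀ j, L j ≠ 0) (hprop : Pairwise fun i j => ∀ c : K, L i ≠ c • L j) :
    Module.finrank K (Submodule.span K (Set.range fun i => pderiv i (∏ j, L j))) =
      (coeffMatrix L).rank := by
  classical
  have hdvd : Pairwise fun i j => ¬L i ∣ L j := fun i j hij h =>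
    have ⟨c, hc⟩ := exists_eq_smul_of_dvd_of_isHomogeneous (hL i) (hL j) h
    hprop hij.symm c hc
  have hindep : LinearIndependent K fun j => ∏ k ∈ Finset.univ.erase j, L k :=
    linearIndependent_prod_erase (fun j => prime_of_isHomogeneous_one_s13 (hL j) (hL0 j)) hdvd
  rw [funext (pderiv_prod_eq_sum_coeffMatrix_smul hL)]
  exact finrank_span_range_sum_smul_eq_rank hindep (coeffMatrix L)

end LinearForms

theorem spanFinrank_jacobianIdeal_prod {K ι : Type*} [Field K] [Fintype ι] {m : ℕ}
    {L : ι → MvPolynomial (Fin m) K} (hL : ∀ j, (L j).IsHomogeneous 1) (hL0 : ∀ j, L j ≠ 0)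
    (hprop : Pairwise fun i j => ∀ c : K, L i ≠ c • L j) :
    (jacobianIdeal (∏ j, L j)).spanFinrank = Module.finrank K (Submodule.span K (Set.range L)) := by
  have hprod : (∏ j, L j).IsHomogeneous (Fintype.card ι) := by
    simpa using IsHomogeneous.prod Finset.univ L (fun _ => 1) fun j _ => hL j
  have hpderiv : ∀ p ∈ Set.range fun i => pderiv i (∏ j, L j),
      p.IsHomogeneous (Fintype.card ι - 1) := Set.forall_mem_range.2 fun _ => hprod.pderiv
  rw [jacobianIdeal, spanFinrank_ideal_span_of_isHomogeneous (Set.finite_range _) hpderiv,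
    finrank_span_range_pderiv_prod_eq_rank_coeffMatrix hL hL0 hprop,
    finrank_span_range_eq_rank_coeffMatrix hL]

theorem stmt_13_general {K ι : Type*} [Field K] [Fintype ι] {m r : ℕ}
    (L : ι → MvPolynomial (Fin m) K) (hhom : ∀ i, (L i).IsHomogeneous 1) (hne : ∀ i, L i ≠ 0)
    (hprop : Pairwise fun i j => ∀ c : K, L i ≠ c • L j) :
    (∃ g : Fin r → MvPolynomial (Fin m) K,
        jacobianIdeal (∏ i, L i) = Ideal.span (Set.range g)) ↔
      ∃ u : Fin r → MvPolynomial (Fin m) K, ∀ i, L i ∈ Submodule.span K (Set.range u) := by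
  rw [exists_fin_forall_mem_span_range_iff_finrank_le,
    ← spanFinrank_jacobianIdeal_prod hhom hne hprop]
  exact exists_fin_span_range_eq_iff_spanFinrank_le (Submodule.fg_span (Set.finite_range _))

/-- Let `K` have characteristic zero and let `f = ℓ₁⋯ℓ_d` be a product
of `d ≥ 2` pairwise non-proportional linear forms `L i` in `K[x₀,…,xₙ]`, defining a
hyperplane arrangement `A` in `ℙⁿ`.  Then the Jacobian ideal `Jac(f)` can be generated by
two elements (equivalently, `Jac(f)` is a complete intersection) iff all the hyperplanes
of `A` contain a common linear subspace of `ℙⁿ` of dimension `n − 2`, i.e. iff the linear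
forms `L i` span a `K`-subspace of dimension at most `2` (they all lie in the span of two
polynomials). -/
theorem stmt_13 {K : Type*} [Field K] [CharZero K] {n d : ℕ} (hn : 1 ≤ n) (hd : 2 ≤ d)
    (L : Fin d → MvPolynomial (Fin (n + 1)) K)
    (hhom : ∀ i, (L i).IsHomogeneous 1) (hne : ∀ i, L i ≠ 0)
    (hprop : ∀ i j, i ≠ j → ∀ c : K, L i ≠ c • L j) :
    (∃ g h : MvPolynomial (Fin (n + 1)) K,
        jacobianIdeal (∏ i, L i) = Ideal.span {g, h}) ↔
      ∃ u v : MvPolynomial (Fin (n + 1)) K,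
        ∀ i, L i ∈ Submodule.span K ({u, v} : Set (MvPolynomial (Fin (n + 1)) K)) := by
  simpa [Fin.exists_fin_succ_pi, Fin.range_cons] using
    stmt_13_general (r := 2) L hhom hne hprop
end
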